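/- arXiv:2208.11768 — 13 statements merged into one kernel-verified Lean document; each statement's English description precedes it below -/
import Mathlib

section
/- Let A be a finite alphabet, let F ⊆ A* be a uniformly recurrent language, and let X ⊆ F be a finite F-complete bifix code. If the complete bifix decoding δ⁻¹(F) of F by X is a recurrent language over the alphabet X, then δ⁻¹(F) is uniformly recurrent over the alphabet X. -/
/-- A language is factorial if it is closed under taking factors (infixes). -/
def Factorial {A : Type*} (F : Set (List A)) : Prop :=
  ∀ u w : List A, w ∈ F → u <:+: w → u ∈ F

/-- A language is prolongable if every word extends by a letter on both sides. -/
def Prolongable {A : Type*} (F : Set (List A)) : Prop :=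
  ∀ u ∈ F, ∃ a b : A, (a :: u) ∈ F ∧ (u ++ [b]) ∈ F

/-- A subshift language: nonempty, factorial and prolongable. -/
def SubshiftLanguage {A : Type*} (F : Set (List A)) : Prop :=
  F.Nonempty ∧ Factorial F ∧ Prolongable F

/-- A recurrent language. -/
def Recurrent {A : Type*} (F : Set (List A)) : Prop :=
  SubshiftLanguage F ∧ ∀ u ∈ F, ∀ v ∈ F, ∃ w : List A, u ++ w ++ v ∈ F

/-- A uniformly recurrent language. -/
def UniformlyRecurrent {A : Type*} (F : Set (List A)) : Prop :=
  SubshiftLanguage F ∧ ∀ u ∈ F, ∃ N : ℕ, ∀ w ∈ F, N ≤ w.length → u <:+: w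

/-- The Kleene star of a set of words: all concatenations of finitely many elements. -/
def KStarSet {A : Type*} (X : Set (List A)) : Set (List A) :=
  {w | ∃ l : List (List A), (∀ x ∈ l, x ∈ X) ∧ w = l.flatten}

/-- A code: a nonempty set of nonempty words with unique factorization. -/
def IsCode {A : Type*} (X : Set (List A)) : Prop :=
  X.Nonempty ∧ (∀ x ∈ X, x ≠ []) ∧
    ∀ l m : List (List A), (∀ x ∈ l, x ∈ X) → (∀ y ∈ m, y ∈ X) →
      l.flatten = m.flatten → l = m

/-- A prefix code: a nonempty set of nonempty words, none a proper prefix of another. -/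
def PrefixCode {A : Type*} (X : Set (List A)) : Prop :=
  X.Nonempty ∧ (∀ x ∈ X, x ≠ []) ∧ ∀ x ∈ X, ∀ y ∈ X, x <+: y → x = y

/-- A suffix code: a nonempty set of nonempty words, none a proper suffix of another. -/
def SuffixCode {A : Type*} (X : Set (List A)) : Prop :=
  X.Nonempty ∧ (∀ x ∈ X, x ≠ []) ∧ ∀ x ∈ X, ∀ y ∈ X, x <:+ y → x = y

/-- A bifix code is both a prefix code and a suffix code. -/
def BifixCode {A : Type*} (X : Set (List A)) : Prop :=
  PrefixCode X ∧ SuffixCode X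

/-- `X` is right `F`-complete: every element of `F` is a prefix of an element of `X*`. -/
def RightFComplete {A : Type*} (X F : Set (List A)) : Prop :=
  ∀ u ∈ F, ∃ w ∈ KStarSet X, u <+: w

/-- `X` is left `F`-complete: every element of `F` is a suffix of an element of `X*`. -/
def LeftFComplete {A : Type*} (X F : Set (List A)) : Prop :=
  ∀ u ∈ F, ∃ w ∈ KStarSet X, u <:+ w

/-- `X` is `F`-complete: both right and left `F`-complete. -/
def FComplete {A : Type*} (X F : Set (List A)) : Prop :=
  RightFComplete X F ∧ LeftFComplete X F

/-- The decoding map: a word over the alphabet `X` is sent to its concatenation in `A*`. -/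
def decode {A : Type*} (X : Set (List A)) : List ↥X → List A :=
  fun l => (l.map Subtype.val).flatten

/-- A language is rational if it is accepted by a DFA with finitely many states. -/
def IsRational {A : Type*} (L : Set (List A)) : Prop :=
  ∃ (σ : Type) (_ : Fintype σ) (M : DFA A σ), ∀ w : List A, w ∈ M.accepts ↔ w ∈ L

theorem dec_append {A : Type*} {X : Set (List A)} (a b : List ↥X) :
    decode X (a ++ b) = decode X a ++ decode X b := by
  simp [decode]

theorem dec_cons {A : Type*} {X : Set (List A)} (a : ↥X) (b : List ↥X) :
    decode X (a :: b) = a.1 ++ decode X b := by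
  simp [decode]

theorem dec_nil {A : Type*} {X : Set (List A)} : decode X [] = [] := by
  simp [decode]

theorem dec_left {A : Type*} {X : Set (List A)} (hX : PrefixCode X) (a : List ↥X) :
    ∀ (m : List ↥X) (b : List A), decode X a ++ b = decode X m →
      ∃ c, m = a ++ c ∧ b = decode X c := by
  induction a with
  | nil => intro m b h; exact ⟨m, rfl, by simpa [dec_nil] using h⟩
  | cons x a ih =>
    intro m b h
    cases m with
    | nil =>
      have := hX.2.1 x.1 x.2
      simp [dec_nil, dec_cons] at h
      exact absurd h.1 this
    | cons y m =>
      rw [dec_cons, dec_cons, List.append_assoc] at h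
      have hxy : x = y := by
        have h1 : x.1 <+: y.1 ++ decode X m := ⟨_, h⟩
        have h2 : y.1 <+: y.1 ++ decode X m := ⟨_, rfl⟩
        rcases List.prefix_or_prefix_of_prefix h1 h2 with h3 | h3
        · exact Subtype.ext (hX.2.2 _ x.2 _ y.2 h3)
        · exact Subtype.ext (hX.2.2 _ y.2 _ x.2 h3).symm
      subst hxy
      obtain ⟨c, hc, hb⟩ := ih m b (List.append_cancel_left h)
      exact ⟨c, by simp [hc], hb⟩

theorem dec_right {A : Type*} {X : Set (List A)} (hX : SuffixCode X) (a : List ↥X) :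
    ∀ (m : List ↥X) (b : List A), b ++ decode X a = decode X m →
      ∃ c, m = c ++ a ∧ b = decode X c := by
  induction a using List.reverseRecOn with
  | nil => intro m b h; exact ⟨m, by simp, by simpa [dec_nil] using h⟩
  | append_singleton a x ih =>
    intro m b h
    induction m using List.reverseRecOn with
    | nil =>
      have := hX.2.1 x.1 x.2
      simp [dec_nil, dec_cons, dec_append] at h
      exact absurd h.2.2 this
    | append_singleton m y _ =>
      simp only [dec_append, dec_cons, dec_nil, List.append_nil] at h
      rw [← List.append_assoc] at h
      have hxy : x = y := by
        have h1 : x.1 <:+ decode X m ++ y.1 := ⟨_, h⟩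
        have h2 : y.1 <:+ decode X m ++ y.1 := ⟨_, rfl⟩
        rcases List.suffix_or_suffix_of_suffix h1 h2 with h3 | h3
        · exact Subtype.ext (hX.2.2 _ x.2 _ y.2 h3)
        · exact Subtype.ext (hX.2.2 _ y.2 _ x.2 h3).symm
      subst hxy
      obtain ⟨c, hc, hb⟩ := ih m b (List.append_cancel_right h)
      exact ⟨c, by simp [hc], hb⟩

theorem dec_length {A : Type*} {X : Set (List A)} (hX : PrefixCode X) (a : List ↥X) :
    a.length ≤ (decode X a).length := by
  induction a with
  | nil => simp
  | cons x a ih =>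
    have := List.length_pos_iff.2 (hX.2.1 x.1 x.2)
    rw [dec_cons]; simp; omega

theorem residue {A : Type*} {F X : Set (List A)} (hF : Factorial F) (hX : PrefixCode X)
    (hc : RightFComplete X F) (L : ℕ) (hL : ∀ x ∈ X, x.length ≤ L) :
    ∀ (n : ℕ) (s : List A), s ∈ F → s.length ≤ n →
      ∃ (c : List ↥X) (r : List A), s = decode X c ++ r ∧ r.length < L + 1 := by
  intro n
  induction n with
  | zero => intro s _ h; exact ⟨[], s, by simp [dec_nil], by omega⟩
  | succ n ih =>
    intro s hs hn
    by_cases hsl : s.length < L + 1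
    · exact ⟨[], s, by simp [dec_nil], hsl⟩
    obtain ⟨w, ⟨l, hl, rfl⟩, hp⟩ := hc s hs
    cases l with
    | nil => simp at hp; subst hp; simp at hsl
    | cons x l =>
      have hx : x ∈ X := hl x (by simp)
      have hxL := hL x hx
      have hxs : x <+: s := List.prefix_of_prefix_length_le
        (l₃ := (x :: l).flatten) ⟨l.flatten, by simp⟩ hp (by omega)
      obtain ⟨t, rfl⟩ := hxs
      have := List.length_pos_iff.2 (hX.2.1 x hx)
      simp at hn
      obtain ⟨c, r, h1, h2⟩ := ih t (hF t _ hs ⟨x, [], by simp⟩) (by omega)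
      exact ⟨⟨x, hx⟩ :: c, r, by rw [dec_cons, h1]; simp, h2⟩

def GoodPos {A : Type*} (X : Set (List A)) (u : List ↥X) (w : List A) (S : Finset ℕ) : Prop :=
  (∀ i ∈ S, i ≤ w.length ∧ decode X u <+: w.drop i) ∧
  ∀ i ∈ S, ∀ j ∈ S, i < j → ∀ c, (w.drop i).take (j - i) ≠ decode X c

theorem good_bound {A : Type*} {F X : Set (List A)} (hF : Factorial F) (hX : BifixCode X)
    (hc : RightFComplete X F) (L : ℕ) (hL : ∀ x ∈ X, x.length ≤ L) (u : List ↥X) (w : List A)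
    (hw : w ∈ F) (S : Finset ℕ) (hS : GoodPos X u w S) : S.card ≤ L + 1 := by
  have key : ∀ i, ∃ (c : List ↥X) (r : List A), w.drop i = decode X c ++ r ∧ r.length < L + 1 :=
    fun i => residue hF hX.1 hc L hL _ _ (hF _ _ hw (List.drop_suffix i w).isInfix) le_rfl
  choose c r h1 h2 using key
  have hlt : ∀ i ∈ S, ∀ j ∈ S, i < j → (r i).length ≠ (r j).length := by
    intro i hi j hj hij hr
    have hd : w.drop i = (w.drop i).take (j - i) ++ w.drop j := by
      conv_lhs => rw [← List.take_append_drop (j - i) (w.drop i)]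
      rw [List.drop_drop]; congr 2; omega
    have e : decode X (c i) ++ r i = ((w.drop i).take (j - i) ++ decode X (c j)) ++ r j := by
      rw [← h1, List.append_assoc, ← h1, ← hd]
    have e2 := (List.append_inj' e hr).1
    obtain ⟨c', _, h⟩ := dec_right hX.2 _ _ _ e2.symm
    exact hS.2 i hi j hj hij c' h
  have : S.card ≤ (Finset.range (L + 1)).card := by
    apply Finset.card_le_card_of_injOn (fun i => (r i).length)
    · intro i _; simpa using h2 i
    · intro i hi j hj hij
      rcases lt_trichotomy i j with h | h | h
      · exact absurd hij (hlt i hi j hj h)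
      · exact h
      · exact absurd hij.symm (hlt j hj i hi h)
  simpa using this

theorem good_step {A : Type*} {X : Set (List A)} (hX : BifixCode X)
    (u v t : List ↥X) (w p q : List A) (hv : decode X v = p ++ w ++ q) (hu : ¬ u <:+: v)
    (S : Finset ℕ) (hS : GoodPos X u w S) :
    ∃ S', GoodPos X u (decode X (v ++ t ++ u)) S' ∧ S'.card = S.card + 1 := by
  set M := (decode X (v ++ t)).length with hM
  have hW : decode X (v ++ t ++ u) = p ++ (w ++ (q ++ (decode X t ++ decode X u))) := by
    simp [dec_append, hv]
  have hMl : M = p.length + w.length + q.length + (decode X t).length := by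
    rw [hM, dec_append, hv]; simp; omega
  have hdrop : ∀ i ≤ w.length, (decode X (v ++ t ++ u)).drop (p.length + i)
      = w.drop i ++ (q ++ (decode X t ++ decode X u)) := by
    intro i hi
    rw [hW, ← List.drop_drop, List.drop_left, List.drop_append_of_le_length hi]
  have hMn : ∀ i ∈ S, ∀ c, ((decode X (v ++ t ++ u)).drop (p.length + i)).take
      (M - (p.length + i)) ≠ decode X c := by
    intro i hi c hc
    obtain ⟨hil, r, hr⟩ := hS.1 i hi
    rw [hdrop i hil] at hc
    have e0 : w.drop i ++ (q ++ (decode X t ++ decode X u))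
      = (w.drop i ++ (q ++ decode X t)) ++ decode X u := by simp
    rw [e0, List.take_left' (by simp; omega)] at hc
    have e1 : (p ++ w.take i) ++ decode X c = decode X (v ++ t) := by
      rw [← hc, dec_append, hv]
      conv_rhs => rw [← List.take_append_drop i w]
      simp only [List.append_assoc]
    obtain ⟨c', _, hc'⟩ := dec_right hX.2 _ _ _ e1
    have e2 : decode X (c' ++ u) ++ (r ++ q) = decode X v := by
      rw [dec_append, ← hc', hv]
      conv_rhs => rw [← List.take_append_drop i w, ← hr]
      simp
    obtain ⟨d, hd, _⟩ := dec_left hX.1 _ _ _ e2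
    exact hu ⟨c', d, hd.symm⟩
  have hnot : M ∉ S.map (addLeftEmbedding p.length) := by
    intro h
    obtain ⟨i, hi, hiM⟩ := Finset.mem_map.1 h
    simp at hiM
    exact hMn i hi [] (by rw [hiM]; simp [dec_nil])
  refine ⟨insert M (S.map (addLeftEmbedding p.length)), ⟨?_, ?_⟩, ?_⟩
  · intro i hi
    rcases Finset.mem_insert.1 hi with rfl | hi
    · refine ⟨by rw [hM, dec_append _ u]; simp, ?_⟩
      rw [dec_append _ u, hM, List.drop_left]
    · obtain ⟨i, hi2, rfl⟩ := Finset.mem_map.1 hi; clear hi; clear hi; rename' hi2 => hi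
      obtain ⟨hil, hp⟩ := hS.1 i hi
      simp only [addLeftEmbedding_apply]
      refine ⟨by rw [hW]; simp; omega, ?_⟩
      rw [hdrop i hil]
      exact hp.trans (List.prefix_append _ _)
  · intro i hi j hj hij
    rcases Finset.mem_insert.1 hi with rfl | hi
    · rcases Finset.mem_insert.1 hj with rfl | hj
      · omega
      · obtain ⟨j, hj2, rfl⟩ := Finset.mem_map.1 hj; clear hj; clear hj; rename' hj2 => hj
        have := (hS.1 j hj).1
        simp only [addLeftEmbedding_apply] at hij
        omega
    · obtain ⟨i, hi2, rfl⟩ := Finset.mem_map.1 hi; clear hi; clear hi; rename' hi2 => hi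
      rcases Finset.mem_insert.1 hj with rfl | hj
      · exact hMn i hi
      · obtain ⟨j, hj2, rfl⟩ := Finset.mem_map.1 hj; clear hj; clear hj; rename' hj2 => hj
        simp only [addLeftEmbedding_apply] at hij ⊢
        intro c
        have h1 := (hS.1 i hi).1
        have h2 := (hS.1 j hj).1
        rw [hdrop i h1, List.take_append_of_le_length (by simp; omega)]
        have := hS.2 i hi j hj (by omega) c
        rwa [show p.length + j - (p.length + i) = j - i by omega]
  · rw [Finset.card_insert_of_notMem hnot, Finset.card_map]

/-- If the complete bifix decoding of a uniformly recurrent language `F`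
by a finite `F`-complete bifix code `X ⊆ F` is recurrent over the alphabet `X`,
then it is uniformly recurrent over `X`. -/
theorem charged_decoding_recurrent_implies_uniformly_recurrent
    {A : Type*} [Fintype A] [Nonempty A] (F X : Set (List A))
    (hF : UniformlyRecurrent F) (hXF : X ⊆ F) (hXfin : X.Finite)
    (hXbifix : BifixCode X) (hXcomp : FComplete X F)
    (hrec : Recurrent {l : List ↥X | decode X l ∈ F}) :
    UniformlyRecurrent {l : List ↥X | decode X l ∈ F} := by
  refine ⟨hrec.1, fun u hu => ?_⟩
  by_contra hcon
  push Not at hcon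
  obtain ⟨L, hL⟩ := (hXfin.image List.length).bddAbove
  have hL' : ∀ x ∈ X, x.length ≤ L := fun x hx => hL ⟨x, hx, rfl⟩
  have all : ∀ k : ℕ, ∃ w ∈ F, ∃ S, GoodPos X u w S ∧ S.card = k := by
    intro k
    induction k with
    | zero =>
      obtain ⟨w, hw⟩ := hF.1.1
      exact ⟨w, hw, ∅, ⟨by simp, by simp⟩, rfl⟩
    | succ k ih =>
      obtain ⟨w, hw, S, hS, hk⟩ := ih
      obtain ⟨N, hN⟩ := hF.2 w hw
      obtain ⟨v, hv, hvN, huv⟩ := hcon N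
      obtain ⟨p, q, hpq⟩ := hN (decode X v) hv (hvN.trans (dec_length hXbifix.1 v))
      obtain ⟨t, ht⟩ := hrec.2 v hv u hu
      obtain ⟨S', h1, h2⟩ := good_step hXbifix u v t w p q hpq.symm huv S hS
      exact ⟨_, ht, S', h1, by rw [h2, hk]⟩
  obtain ⟨w, hw, S, hS, hk⟩ := all (L + 2)
  have := good_bound hF.1.2.1 hXbifix hXcomp.1 L hL' u w hw S hS
  omega
end

section
/- Let A be a finite alphabet and let F₁, …, F_k ⊆ A* be finitely many uniformly recurrent languages. If the union F = F₁ ∪ ⋯ ∪ F_k is recurrent, then F is uniformly recurrent. -/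
/-- A finite union of uniformly recurrent languages that is recurrent
is uniformly recurrent. -/
theorem recurrent_finite_union_of_uniformlyRecurrent_is_uniformlyRecurrent
    {A : Type*} [Fintype A] [Nonempty A] (k : ℕ) (F : Fin k → Set (List A))
    (hF : ∀ i, UniformlyRecurrent (F i))
    (hrec : Recurrent (⋃ i, F i)) :
    UniformlyRecurrent (⋃ i, F i) := by
  have key : ∃ i, (⋃ i, F i) ⊆ F i := by
    by_contra hno
    push Not at hno
    simp only [Set.not_subset] at hno
    choose u hu hnu using hno
    have h : ∀ s : Finset (Fin k), ∃ w ∈ ⋃ i, F i, ∀ i ∈ s, u i <:+: w := by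
      intro s
      induction s using Finset.induction_on with
      | empty =>
        obtain ⟨w, hw⟩ := hrec.1.1
        exact ⟨w, hw, by simp⟩
      | insert a s _ ih =>
        obtain ⟨w, hw, hs⟩ := ih
        obtain ⟨v, hv⟩ := hrec.2 (u a) (hu a) w hw
        refine ⟨_, hv, ?_⟩
        intro i hi
        rcases Finset.mem_insert.1 hi with rfl | hi
        · exact ⟨[], v ++ w, by simp⟩
        · exact (hs i hi).trans ⟨u a ++ v, [], by simp⟩
    obtain ⟨w, hw, hall⟩ := h Finset.univ
    obtain ⟨j, hj⟩ := Set.mem_iUnion.1 hw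
    exact hnu j ((hF j).1.2.1 _ _ hj (hall j (Finset.mem_univ j)))
  obtain ⟨i, hi⟩ := key
  have heq : (⋃ i, F i) = F i := Set.Subset.antisymm hi (Set.subset_iUnion F i)
  rw [heq]
  exact hF i
end

section
/- Let A be a finite alphabet, let F ⊆ A* be a subshift language, and let X ⊆ F be a finite F-complete bifix code. Then the decoding δ⁻¹(F) of F by X is a subshift language over the alphabet X: it is nonempty, factorial, and prolongable. -/
theorem pre_aux {A : Type*} {X : Set (List A)} (h : PrefixCode X) (l : List (List A)) :
    ∀ m : List (List A), (∀ x ∈ l, x ∈ X) → (∀ x ∈ m, x ∈ X) →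
      l.flatten <+: m.flatten → l <+: m := by
  induction l with
  | nil => intros; exact List.nil_prefix
  | cons x l ih =>
    intro m hl hm hp
    have hx : x ∈ X := hl x (by simp)
    cases m with
    | nil =>
      have := h.2.1 x hx
      simp at hp
      exact absurd hp.1 this
    | cons y m =>
      have hy : y ∈ X := hm y (by simp)
      simp only [List.flatten_cons] at hp
      have h1 : x <+: y ++ m.flatten := (List.prefix_append _ _).trans hp
      have h2 : y <+: y ++ m.flatten := List.prefix_append _ _
      have hxy : x = y := by
        rcases List.prefix_or_prefix_of_prefix h1 h2 with h3 | h3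
        · exact h.2.2 x hx y hy h3
        · exact (h.2.2 y hy x hx h3).symm
      subst hxy
      rw [List.prefix_append_right_inj] at hp
      rw [List.prefix_cons_inj]
      exact ih m (fun z hz => hl z (by simp [hz])) (fun z hz => hm z (by simp [hz])) hp

theorem ext_aux {A : Type*} {F : Set (List A)} (h : Prolongable F) (w : List A) (hw : w ∈ F)
    (n : ℕ) : ∃ v : List A, v.length = n ∧ w ++ v ∈ F := by
  induction n with
  | zero => exact ⟨[], rfl, by simpa using hw⟩
  | succ n ih =>
    obtain ⟨v, hv, hwv⟩ := ih
    obtain ⟨_, b, _, hb⟩ := h _ hwv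
    exact ⟨v ++ [b], by simp [hv], by simpa using hb⟩

theorem right_aux {A : Type*} (F X : Set (List A))
    (hfac : Factorial F) (hpro : Prolongable F) (hXfin : X.Finite)
    (hX : PrefixCode X) (hc : RightFComplete X F) (l : List (List A)) (hl : ∀ x ∈ l, x ∈ X)
    (hlF : l.flatten ∈ F) : ∃ x ∈ X, l.flatten ++ x ∈ F := by
  obtain ⟨N, hN⟩ := (hXfin.image List.length).bddAbove
  obtain ⟨v, hv, hwv⟩ := ext_aux hpro _ hlF (N + 1)
  obtain ⟨_, ⟨m, hm, rfl⟩, hp⟩ := hc _ hwv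
  obtain ⟨m', rfl⟩ := pre_aux hX l m hl hm ((List.prefix_append _ _).trans hp)
  rw [List.flatten_append, List.prefix_append_right_inj] at hp
  cases m' with
  | nil =>
    simp at hp
    simp [hp] at hv
  | cons y m =>
    have hy : y ∈ X := hm y (by simp)
    have hyN : y.length ≤ N := hN ⟨y, hy, rfl⟩
    have hyv : y <+: v := by
      refine List.prefix_of_prefix_length_le ?_ hp (by omega)
      simp
    refine ⟨y, hy, hfac _ _ hwv ?_⟩
    exact ((List.prefix_append_right_inj _).2 hyv).isInfix

theorem rev_flat {A : Type*} (l : List (List A)) :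
    ((l.map List.reverse).reverse).flatten = l.flatten.reverse := by
  induction l with
  | nil => rfl
  | cons x l ih => simp_all

theorem left_aux {A : Type*} (F X : Set (List A))
    (hfac : Factorial F) (hpro : Prolongable F) (hXfin : X.Finite)
    (hX : SuffixCode X) (hc : LeftFComplete X F) (l : List (List A)) (hl : ∀ x ∈ l, x ∈ X)
    (hlF : l.flatten ∈ F) : ∃ x ∈ X, x ++ l.flatten ∈ F := by
  have key := right_aux (List.reverse ⁻¹' F) (List.reverse ⁻¹' X) ?_ ?_ ?_ ?_ ?_
    ((l.map List.reverse).reverse) ?_ ?_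
  · obtain ⟨x, hx, hF⟩ := key
    refine ⟨x.reverse, hx, ?_⟩
    rw [rev_flat] at hF
    simpa using hF
  · intro u w hw hu
    exact hfac _ _ hw (List.reverse_infix.2 hu)
  · intro u hu
    obtain ⟨a, b, ha, hb⟩ := hpro _ hu
    exact ⟨b, a, by simpa using hb, by simpa using ha⟩
  · exact hXfin.preimage (List.reverse_injective.injOn)
  · refine ⟨?_, ?_, ?_⟩
    · obtain ⟨x, hx⟩ := hX.1
      exact ⟨x.reverse, by simpa using hx⟩
    · intro x hx h0
      exact hX.2.1 _ hx (by simp [h0])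
    · intro x hx y hy hxy
      exact List.reverse_injective (hX.2.2 _ hx _ hy (List.reverse_suffix.2 hxy))
  · intro u hu
    obtain ⟨_, ⟨m, hm, rfl⟩, hs⟩ := hc _ hu
    refine ⟨_, ⟨(m.map List.reverse).reverse, ?_, rfl⟩, ?_⟩
    · intro x hx
      simp only [List.mem_reverse, List.mem_map] at hx
      obtain ⟨z, hz, rfl⟩ := hx
      simpa using hm z hz
    · rw [rev_flat, ← List.reverse_suffix]
      simpa using hs
  · intro x hx
    simp only [List.mem_reverse, List.mem_map] at hx
    obtain ⟨z, hz, rfl⟩ := hx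
    simpa using hl z hz
  · rw [rev_flat]
    simpa using hlF

/-- The decoding of a subshift language `F` by a finite `F`-complete
bifix code `X ⊆ F` is a subshift language over the alphabet `X`. -/
theorem decoding_is_subshift_language
    {A : Type*} [Fintype A] [Nonempty A] (F X : Set (List A))
    (hF : SubshiftLanguage F) (hXF : X ⊆ F) (hXfin : X.Finite)
    (hXbifix : BifixCode X) (hXcomp : FComplete X F) :
    SubshiftLanguage {l : List ↥X | decode X l ∈ F} := by
  obtain ⟨⟨w, hw⟩, hfac, hpro⟩ := hF
  refine ⟨⟨[], hfac _ _ hw (by simp [decode])⟩, ?_, ?_⟩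
  · rintro u _ hw ⟨s, t, rfl⟩
    refine hfac _ _ hw ⟨decode X s, decode X t, ?_⟩
    simp [decode]
  · intro u hu
    have hl : ∀ x ∈ u.map Subtype.val, x ∈ X := by
      intro x hx
      obtain ⟨z, _, rfl⟩ := List.mem_map.1 hx
      exact z.2
    obtain ⟨x, hx, hxF⟩ := left_aux F X hfac hpro hXfin hXbifix.2 hXcomp.2 _ hl hu
    obtain ⟨y, hy, hyF⟩ := right_aux F X hfac hpro hXfin hXbifix.1 hXcomp.1 _ hl hu
    exact ⟨⟨x, hx⟩, ⟨y, hy⟩, by simpa [decode] using hxF, by simpa [decode] using hyF⟩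
end

section
/- Let A be a finite alphabet, let F ⊆ A* be a recurrent language, and let Z ⊆ A+ be a rational complete bifix code. Then Z ∩ F is an F-complete bifix code: it is a bifix code contained in F that is both right F-complete and left F-complete. -/
theorem aux_exists {A : Type*} (F Z : Set (List A)) (hfac : Factorial F)
    (hrec : ∀ u ∈ F, ∀ v ∈ F, ∃ w : List A, u ++ w ++ v ∈ F)
    {τ : Type} [Finite τ] (f : List A → τ)
    (hf : ∀ u v, f u = f v → ∀ t, u ++ t ∈ Z → v ++ t ∈ Z)
    (hs : ∀ x ∈ Z, ∀ y ∈ Z, x <:+ y → x = y)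
    (hc : RightFComplete Z Set.univ)
    (u : List A) (hu : u ∈ F) (hne : u ≠ []) :
    ∃ z ∈ Z, z ∈ F ∧ (z <+: u ∨ u <+: z) := by
  by_contra hcon
  have hno : ∀ v, u ++ v ∈ F → ∀ z ∈ Z, ¬ z <+: u ++ v := by
    intro v hv z hz hp
    exact hcon ⟨z, hz, hfac _ _ hv hp.isInfix,
      List.prefix_or_prefix_of_prefix hp (List.prefix_append u v)⟩
  have hstep : ∀ x : {x // x ∈ F}, ∃ y : {y // y ∈ F}, ∃ w, y.1 = u ++ w ++ x.1 := by
    intro x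
    obtain ⟨w, hw⟩ := hrec u hu x.1 x.2
    exact ⟨⟨_, hw⟩, w, rfl⟩
  choose nx w hnx using hstep
  let g : ℕ → {x // x ∈ F} := fun n => nx^[n] ⟨u, hu⟩
  have hg : ∀ n, (g (n+1)).1 = u ++ w (g n) ++ (g n).1 := by
    intro n
    have : g (n+1) = nx (g n) := Function.iterate_succ_apply' nx n _
    rw [this, hnx]
  have hpre : ∀ n, u <+: (g n).1 := by
    intro n
    cases n with
    | zero => exact List.prefix_rfl
    | succ n => rw [hg, List.append_assoc]; exact List.prefix_append _ _
  have hlen : StrictMono (fun n => (g n).1.length) := by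
    apply strictMono_nat_of_lt_succ
    intro n
    have := List.length_pos_iff.2 hne
    simp only [hg, List.length_append]
    omega
  have hsuf : ∀ n k, (g n).1 <:+ (g (n+k)).1 := by
    intro n k
    induction k with
    | zero => exact List.suffix_rfl
    | succ k ih =>
      refine ih.trans ?_
      rw [← Nat.add_assoc, hg]
      exact List.suffix_append _ _
  have hext : ∀ n, ∃ t, (g n).1 ++ t ∈ Z := by
    intro n
    obtain ⟨x, ⟨l, hl, rfl⟩, hx⟩ := hc (g n).1 trivial
    cases l with
    | nil =>
      have h1 : (g n).1 = [] := by simpa using hx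
      have h2 := hpre n
      rw [h1] at h2
      exact absurd (List.prefix_nil.1 h2) hne
    | cons z l =>
      have hz : z ∈ Z := hl z (by simp)
      have hz' : z <+: (z :: l).flatten := by simp
      rcases List.prefix_or_prefix_of_prefix hz' hx with h | h
      · obtain ⟨v, hv⟩ := hpre n
        exact absurd (hv ▸ h) (hno v (hv ▸ (g n).2) z hz)
      · obtain ⟨t, rfl⟩ := h
        exact ⟨t, hz⟩
  obtain ⟨n, m, hnm, hfe⟩ := Finite.exists_ne_map_eq_of_infinite (fun n => f (g n).1)
  wlog hlt : n < m generalizing n m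
  · exact this m n hnm.symm hfe.symm (by omega)
  obtain ⟨k, rfl⟩ := Nat.exists_eq_add_of_le hlt.le
  obtain ⟨t, ht⟩ := hext n
  have h2 := hf _ _ hfe t ht
  have h3 : (g n).1 ++ t <:+ (g (n+k)).1 ++ t := by
    obtain ⟨s, hs⟩ := hsuf n k
    exact ⟨s, by rw [← hs, List.append_assoc]⟩
  have h4 := congrArg List.length (hs _ ht _ h2 h3)
  have h5 := hlen hlt
  simp only [List.length_append] at h4 h5
  omega

theorem aux_right {A : Type*} (F Z : Set (List A)) (hfac : Factorial F)
    (hrec : ∀ u ∈ F, ∀ v ∈ F, ∃ w : List A, u ++ w ++ v ∈ F)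
    {τ : Type} [Finite τ] (f : List A → τ)
    (hf : ∀ u v, f u = f v → ∀ t, u ++ t ∈ Z → v ++ t ∈ Z)
    (hs : ∀ x ∈ Z, ∀ y ∈ Z, x <:+ y → x = y) (hz0 : ∀ x ∈ Z, x ≠ [])
    (hc : RightFComplete Z Set.univ) : RightFComplete (Z ∩ F) F := by
  have key : ∀ n, ∀ u : List A, u.length ≤ n → u ∈ F →
      ∃ w ∈ KStarSet (Z ∩ F), u <+: w := by
    intro n
    induction n with
    | zero =>
      intro u hu _
      have : u = [] := List.length_eq_zero_iff.1 (by omega)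
      subst this
      exact ⟨[], ⟨[], by simp, by simp⟩, List.prefix_rfl⟩
    | succ n ih =>
      intro u hu huF
      by_cases hne : u = []
      · subst hne
        exact ⟨[], ⟨[], by simp, by simp⟩, List.prefix_rfl⟩
      obtain ⟨z, hz, hzF, h | h⟩ := aux_exists F Z hfac hrec f hf hs hc u huF hne
      · obtain ⟨u', rfl⟩ := h
        have h0 := List.length_pos_iff.2 (hz0 z hz)
        rw [List.length_append] at hu
        obtain ⟨w, ⟨l, hl, rfl⟩, hw⟩ := ih u' (by omega)
          (hfac _ _ huF (List.suffix_append z u').isInfix)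
        refine ⟨z ++ l.flatten, ⟨z :: l, ?_, by simp⟩, (List.prefix_append_right_inj z).2 hw⟩
        intro x hx
        rcases List.mem_cons.1 hx with rfl | hx
        · exact ⟨hz, hzF⟩
        · exact hl x hx
      · exact ⟨z, ⟨[z], by simpa using ⟨hz, hzF⟩, by simp⟩, h⟩
  exact fun u hu => key _ u le_rfl hu

theorem aux_kstar_rev {A : Type*} (X : Set (List A)) (w : List A) (hw : w ∈ KStarSet X) :
    w.reverse ∈ KStarSet (List.reverse ⁻¹' X) := by
  obtain ⟨l, hl, rfl⟩ := hw
  refine ⟨(l.map List.reverse).reverse, ?_, by rw [List.reverse_flatten]⟩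
  intro x hx
  simp only [List.mem_reverse, List.mem_map] at hx
  obtain ⟨y, hy, rfl⟩ := hx
  simpa using hl y hy

/-- If `F` is recurrent and `Z` is a rational complete bifix code,
then `Z ∩ F` is an `F`-complete bifix code. -/
theorem inter_rational_complete_bifix_is_F_complete_bifix
    {A : Type*} [Fintype A] [Nonempty A] (F Z : Set (List A))
    (hF : Recurrent F) (hZrat : IsRational Z) (hZbifix : BifixCode Z)
    (hZcomp : FComplete Z Set.univ) :
    BifixCode (Z ∩ F) ∧ (Z ∩ F) ⊆ F ∧ FComplete (Z ∩ F) F := by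
  obtain ⟨⟨hFne, hfac, hprol⟩, hrec⟩ := hF
  obtain ⟨σ, _, M, hM⟩ := hZrat
  obtain ⟨⟨hZne, hz0, hp⟩, _, _, hs⟩ := hZbifix
  obtain ⟨hcr, hcl⟩ := hZcomp
  have hR : RightFComplete (Z ∩ F) F := by
    refine aux_right F Z hfac hrec (fun u => M.eval u) ?_ hs hz0 hcr
    intro u v huv t ht
    rw [← hM, DFA.mem_accepts, DFA.eval, DFA.evalFrom_of_append] at ht ⊢
    simp only [DFA.eval] at huv
    rwa [← huv]
  have hL : LeftFComplete (Z ∩ F) F := by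
    have h := aux_right (List.reverse ⁻¹' F) (List.reverse ⁻¹' Z)
      (fun u w hw huw => hfac _ _ hw (List.reverse_infix.2 huw))
      (fun u hu v hv => by
        obtain ⟨w, hw⟩ := hrec _ hv _ hu
        exact ⟨w.reverse, by simpa using hw⟩)
      (fun u => {q : σ | M.evalFrom q u.reverse ∈ M.accept}) ?_
      (fun x hx y hy hxy => List.reverse_injective (hp _ hx _ hy (List.reverse_prefix.2 hxy)))
      (fun x hx h0 => hz0 _ hx (by simp [h0]))
      (fun u _ => by
        obtain ⟨w, hw, huw⟩ := hcl u.reverse trivial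
        exact ⟨w.reverse, aux_kstar_rev Z w hw, by
          simpa using List.reverse_prefix.2 huw⟩)
    · intro u hu
      obtain ⟨w, hw, huw⟩ := h u.reverse (by simpa using hu)
      refine ⟨w.reverse, ?_, by simpa using List.reverse_suffix.2 huw⟩
      have h2 := aux_kstar_rev _ w hw
      have h3 : (List.reverse ⁻¹' (List.reverse ⁻¹' Z ∩ List.reverse ⁻¹' F) : Set (List A))
          = Z ∩ F := by
        ext x; simp
      rwa [h3] at h2
    · intro u v huv t ht
      simp only [Set.mem_preimage, List.reverse_append] at ht ⊢
      rw [← hM, DFA.mem_accepts, DFA.eval, DFA.evalFrom_of_append] at ht ⊢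
      exact (Set.ext_iff.1 huv _).1 ht
  have hne : (Z ∩ F).Nonempty := by
    obtain ⟨u, hu⟩ := hFne
    obtain ⟨a, b, ha, _⟩ := hprol u hu
    obtain ⟨w, ⟨l, hl, rfl⟩, hw⟩ := hR _ ha
    cases l with
    | nil => simp at hw
    | cons z l => exact ⟨z, hl z (by simp)⟩
  exact ⟨⟨⟨hne, fun x hx => hz0 x hx.1, fun x hx y hy => hp x hx.1 y hy.1⟩,
    hne, fun x hx => hz0 x hx.1, fun x hx y hy => hs x hx.1 y hy.1⟩,
    Set.inter_subset_right, hR, hL⟩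
end

section
/- Let A be a finite alphabet, let F ⊆ A* be a uniformly recurrent language, and let Z ⊆ A+ be a rational complete bifix code. Then the set Z ∩ F is finite. -/
/-- If `F` is uniformly recurrent and `Z` is a rational complete
bifix code, then `Z ∩ F` is finite. -/
theorem inter_rational_complete_bifix_finite
    {A : Type*} [Fintype A] [Nonempty A] (F Z : Set (List A))
    (hF : UniformlyRecurrent F) (hZrat : IsRational Z) (hZbifix : BifixCode Z)
    (hZcomp : FComplete Z Set.univ) :
    (Z ∩ F).Finite := by
  classical
  obtain ⟨σ, _, M, hM⟩ := hZrat
  obtain ⟨⟨hne, hfac, hpro⟩, hrec⟩ := hF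
  let Q : List A → Set σ := fun u => {q | ∃ t, t <:+ u ∧ M.eval t = q}
  obtain ⟨S, ⟨⟨u, huF, rfl⟩, hmax⟩⟩ :=
    Set.Finite.exists_maximal (Set.toFinite (Q '' F)) (hne.image Q)
  obtain ⟨N, hN⟩ := hrec u huF
  refine (List.finite_length_lt A (N + 1)).subset ?_
  rintro z ⟨hzZ, hzF⟩
  by_contra hlen
  simp only [Set.mem_ofPred_eq, not_lt] at hlen
  cases z with
  | nil => simp at hlen
  | cons a z =>
    have hz : z ∈ F := hfac _ _ hzF (List.suffix_cons a z).isInfix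
    obtain ⟨p, s, hps⟩ := hN z hz (by simpa using hlen)
    have hz2 : a :: z = (a :: p ++ u) ++ s := by simp [← hps]
    have hpu : (a :: p ++ u) ∈ F := by
      refine hfac _ _ hzF ?_
      rw [hz2]
      exact (List.prefix_append _ _).isInfix
    have hsub : Q u ⊆ Q (a :: p ++ u) := by
      rintro q ⟨t, ht, rfl⟩
      exact ⟨t, ht.trans (List.suffix_append _ _), rfl⟩
    have hback : Q (a :: p ++ u) ⊆ Q u := hmax ⟨_, hpu, rfl⟩ hsub
    obtain ⟨t, ⟨r, hr⟩, hte⟩ := hback ⟨_, List.suffix_refl _, rfl⟩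
    have hts : t ++ s ∈ Z := by
      rw [← hM, DFA.mem_accepts, DFA.eval, DFA.evalFrom_of_append]
      rw [← hM, hz2, DFA.mem_accepts, DFA.eval, DFA.evalFrom_of_append] at hzZ
      unfold DFA.eval at hte
      rwa [hte]
    have heq := hZbifix.2.2.2 _ hts _ hzZ ⟨a :: p ++ r, by rw [hz2, ← hr]; simp⟩
    have := congrArg List.length heq
    rw [hz2, ← hr] at this
    simp at this
    omega
end

section
/- Let A be a finite alphabet, let F ⊆ A* be a recurrent language, and let X ⊆ F be a rational bifix code. Then the following conditions are equivalent: (1) X is an F-maximal bifix code; (2) X is left F-complete; (3) X is right F-complete; (4) X is F-complete. -/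
/-- `X` is an `F`-maximal bifix code: a bifix code contained in `F` that is maximal
among bifix codes contained in `F`. -/
def FMaximalBifixCode {A : Type*} (X F : Set (List A)) : Prop :=
  BifixCode X ∧ X ⊆ F ∧ ∀ Y : Set (List A), BifixCode Y → X ⊆ Y → Y ⊆ F → Y = X

theorem thin_of_rational {A : Type*} (F X : Set (List A))
    (hF : Recurrent F) (hXF : X ⊆ F) (hXrat : IsRational X) (hX : PrefixCode X) :
    ∃ w ∈ F, ∀ x ∈ X, ¬ w <:+: x := by
  obtain ⟨σ, _, M, hM⟩ := hXrat
  let S : List A → Set σ := fun w =>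
    {q | ∃ r, M.eval (r ++ w) = q ∧ ∃ t, M.evalFrom q t ∈ M.accept}
  obtain ⟨⟨hne, hfac, hpro⟩, hrec⟩ := hF
  obtain ⟨w, hw, hmin⟩ : ∃ w ∈ F, ∀ v ∈ F, (S w).ncard ≤ (S v).ncard := by
    obtain ⟨w, hw, h⟩ := WellFounded.has_min (measure (fun w => (S w).ncard)).wf F hne
    exact ⟨w, hw, fun v hv => not_lt.1 (h v hv)⟩
  refine ⟨w, hw, ?_⟩
  rintro x hx ⟨r, t, rfl⟩
  have hwt : w ++ t ∈ F := hfac _ _ (hXF hx) ⟨r, [], by simp⟩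
  obtain ⟨v, hv⟩ := hrec _ hwt _ (hXF hx)
  have hacc : ∀ l, M.evalFrom M.start l ∈ M.accept ↔ l ∈ X := fun l => hM l
  have hz : v ++ (r ++ w ++ t) ≠ [] := by
    have := hX.2.1 _ hx
    intro h
    exact this (List.append_eq_nil_iff.1 h).2
  generalize hzz : v ++ (r ++ w ++ t) = z at hz
  have hv' : w ++ (t ++ z) ∈ F := by
    rw [← hzz]; simpa using hv
  have hp : M.eval (r ++ w) ∈ S w := by
    refine ⟨r, rfl, t, ?_⟩
    rw [DFA.eval, ← DFA.evalFrom_of_append, hacc]; exact hx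
  have hsub : S (w ++ (t ++ z)) ⊆ (fun q => M.evalFrom q (t ++ z)) '' (S w \ {M.eval (r ++ w)}) := by
    rintro q ⟨r', hq, t', ht'⟩
    have hq2 : M.evalFrom (M.eval (r' ++ w)) (t ++ z) = q := by
      rw [← hq]; unfold DFA.eval; rw [← DFA.evalFrom_of_append]; simp
    refine ⟨M.eval (r' ++ w), ⟨⟨r', rfl, t ++ z ++ t', ?_⟩, ?_⟩, hq2⟩
    · rw [DFA.evalFrom_of_append, hq2]; exact ht'
    · intro h
      simp only [Set.mem_singleton_iff] at h
      rw [h] at hq2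
      have h3 : (r ++ w ++ t) ++ (z ++ t') ∈ X := by
        rw [← hacc]
        rw [← hq2, DFA.eval, ← DFA.evalFrom_of_append, ← DFA.evalFrom_of_append] at ht'
        simpa using ht'
      have h4 := hX.2.2 _ hx _ h3 ⟨_, rfl⟩
      have h5 := List.self_eq_append_right.1 h4
      exact hz (List.append_eq_nil_iff.1 h5).1
  have h1 := Set.ncard_le_ncard hsub (Set.toFinite _)
  have h2 := Set.ncard_image_le (f := fun q => M.evalFrom q (t ++ z))
    (Set.toFinite (S w \ {M.eval (r ++ w)}))
  have h3 := Set.ncard_sdiff_singleton_lt_of_mem hp (Set.toFinite _)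
  have h4 := hmin _ hv'
  omega

theorem star_append {A : Type*} {X : Set (List A)} {u v : List A}
    (hu : u ∈ KStarSet X) (hv : v ∈ KStarSet X) : u ++ v ∈ KStarSet X := by
  obtain ⟨l, hl, rfl⟩ := hu
  obtain ⟨m, hm, rfl⟩ := hv
  refine ⟨l ++ m, ?_, by simp⟩
  intro x hx
  rcases List.mem_append.1 hx with h | h
  · exact hl _ h
  · exact hm _ h

theorem star_nil {A : Type*} {X : Set (List A)} : ([] : List A) ∈ KStarSet X :=
  ⟨[], by simp, by simp⟩

theorem star_single {A : Type*} {X : Set (List A)} {x : List A} (hx : x ∈ X) : x ∈ KStarSet X :=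
  ⟨[x], by simpa using hx, by simp⟩

theorem strip_prefix {A : Type*} {X : Set (List A)} (hX : ∀ x ∈ X, x ≠ []) :
    ∀ (n : ℕ) (u : List A), u.length ≤ n →
    ∃ x ∈ KStarSet X, ∃ p, u = x ++ p ∧ ∀ y ∈ X, ¬ y <+: p := by
  intro n
  induction n with
  | zero =>
    intro u hu
    have hu' : u = [] := List.length_eq_zero_iff.1 (by omega)
    subst hu'
    refine ⟨[], star_nil, [], rfl, fun y hy h => hX y hy (List.prefix_nil.1 h)⟩
  | succ n ih =>
    intro u hu
    by_cases h : ∃ y ∈ X, y <+: u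
    · obtain ⟨y, hy, v, rfl⟩ := h
      have hpos := List.length_pos_iff.2 (hX y hy)
      obtain ⟨x, hx, p, rfl, hp⟩ := ih v (by simp at hu; omega)
      exact ⟨y ++ x, star_append (star_single hy) hx, p, by simp, hp⟩
    · push Not at h
      exact ⟨[], star_nil, u, rfl, h⟩

theorem strip_suffix {A : Type*} {X : Set (List A)} (hX : ∀ x ∈ X, x ≠ []) :
    ∀ (n : ℕ) (u : List A), u.length ≤ n →
    ∃ x ∈ KStarSet X, ∃ s, u = s ++ x ∧ ∀ y ∈ X, ¬ y <:+ s := by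
  intro n
  induction n with
  | zero =>
    intro u hu
    have hu' : u = [] := List.length_eq_zero_iff.1 (by omega)
    subst hu'
    refine ⟨[], star_nil, [], rfl, fun y hy h => hX y hy (List.suffix_nil.1 h)⟩
  | succ n ih =>
    intro u hu
    by_cases h : ∃ y ∈ X, y <:+ u
    · obtain ⟨y, hy, v, rfl⟩ := h
      have hpos := List.length_pos_iff.2 (hX y hy)
      obtain ⟨x, hx, p, rfl, hp⟩ := ih v (by simp at hu; omega)
      exact ⟨x ++ y, star_append hx (star_single hy), p, by simp, hp⟩
    · push Not at h
      exact ⟨[], star_nil, u, by simp, h⟩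

theorem strip_unique {A : Type*} {X : Set (List A)}
    (hX : PrefixCode X) (p p' : List A) (hp : ∀ y ∈ X, ¬ y <+: p) (hp' : ∀ y ∈ X, ¬ y <+: p') :
    ∀ (l l' : List (List A)), (∀ x ∈ l, x ∈ X) → (∀ x ∈ l', x ∈ X) →
    l.flatten ++ p = l'.flatten ++ p' → p = p' := by
  intro l
  induction l with
  | nil =>
    intro l' _ hl' h
    cases l' with
    | nil => simpa using h
    | cons b l' =>
      exact absurd ⟨l'.flatten ++ p', by simpa using h.symm⟩ (hp b (hl' b (by simp)))
  | cons a l ih =>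
    intro l' hl hl' h
    cases l' with
    | nil =>
      exact absurd ⟨l.flatten ++ p, by simpa using h⟩ (hp' a (hl a (by simp)))
    | cons b l' =>
      have ha := hl a (by simp)
      have hb := hl' b (by simp)
      simp only [List.flatten_cons, List.append_assoc] at h
      have hab : a = b := by
        have h1 : a <+: a ++ (l.flatten ++ p) := ⟨_, rfl⟩
        have h2 : b <+: a ++ (l.flatten ++ p) := ⟨_, h.symm⟩
        rcases List.prefix_or_prefix_of_prefix h1 h2 with h3 | h3
        · exact hX.2.2 a ha b hb h3
        · exact (hX.2.2 b hb a ha h3).symm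
      subst hab
      exact ih l' (fun x hx => hl x (by simp [hx])) (fun x hx => hl' x (by simp [hx]))
        (List.append_cancel_left h)

theorem exists_incomparable {A : Type*} (F X : Set (List A))
    (hF : Factorial F) (hX : PrefixCode X) (h : ¬ RightFComplete X F) :
    ∃ u ∈ F, ∀ x ∈ X, ¬ x <+: u ∧ ¬ u <+: x := by
  unfold RightFComplete at h
  push Not at h
  obtain ⟨u, hu, hn⟩ := h
  obtain ⟨x, hx, p, rfl, hp⟩ := strip_prefix hX.2.1 _ u le_rfl
  refine ⟨p, hF _ _ hu ⟨x, [], by simp⟩, fun y hy => ⟨hp y hy, ?_⟩⟩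
  rintro ⟨t, rfl⟩
  exact hn _ (star_append hx (star_single hy)) ⟨t, by simp⟩

theorem suffix_of_star {A : Type*} {X : Set (List A)} (hX : X.Nonempty) (s : List A)
    (hs : ∀ y ∈ X, ¬ y <:+ s) (h : ∃ w ∈ KStarSet X, s <:+ w) : ∃ x ∈ X, s <:+ x := by
  obtain ⟨w, ⟨l, hl, rfl⟩, hsw⟩ := h
  rcases List.eq_nil_or_concat l with rfl | ⟨l', b, rfl⟩
  · obtain ⟨x, hx⟩ := hX
    have : s = [] := List.suffix_nil.1 (by simpa using hsw)
    exact ⟨x, hx, by simp [this]⟩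
  · have hb : b ∈ X := hl b (by simp)
    have h1 : b <:+ (l' ++ [b]).flatten := ⟨l'.flatten, by simp⟩
    rcases List.suffix_or_suffix_of_suffix h1 (by simpa using hsw) with h3 | h3
    · exact absurd h3 (hs b hb)
    · exact ⟨b, hb, h3⟩

theorem exists_many {A : Type*} (F : Set (List A)) (hF : Recurrent F) (w u : List A)
    (hw : w ∈ F) (hu : u ∈ F) (hune : u ≠ []) (n : ℕ) :
    ∃ W ∈ F, w <+: W ∧ ∃ J : Finset ℕ, J.card = n ∧ ∀ j ∈ J, ∃ q t, W = q ++ (u ++ t) ∧ q.length = j := by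
  induction n with
  | zero => exact ⟨w, hw, List.prefix_rfl, ∅, rfl, by simp⟩
  | succ n ih =>
    obtain ⟨W, hW, hwW, J, hJ, hJ2⟩ := ih
    obtain ⟨v, hv⟩ := hF.2 W hW u hu
    have hupos := List.length_pos_iff.2 hune
    refine ⟨W ++ v ++ u, hv, hwW.trans ⟨v ++ u, by simp⟩, insert (W ++ v).length J, ?_, ?_⟩
    · rw [Finset.card_insert_of_notMem, hJ]
      intro h
      obtain ⟨q, t, h1, h2⟩ := hJ2 _ h
      have := congrArg List.length h1
      simp at this h2
      omega
    · intro j hj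
      rcases Finset.mem_insert.1 hj with rfl | hj
      · exact ⟨W ++ v, [], by simp, rfl⟩
      · obtain ⟨q, t, h1, h2⟩ := hJ2 _ hj
        exact ⟨q, t ++ (v ++ u), by simp [h1], h2⟩

theorem right_of_left {A : Type*} (F X : Set (List A))
    (hF : Recurrent F) (hX : BifixCode X) (hthin : ∃ w ∈ F, ∀ x ∈ X, ¬ w <:+: x)
    (hL : LeftFComplete X F) : RightFComplete X F := by
  by_contra hR
  obtain ⟨u, hu, hinc⟩ := exists_incomparable F X hF.1.2.1 hX.1 hR
  obtain ⟨w, hw, hwX⟩ := hthin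
  have hune : u ≠ [] := by
    rintro rfl
    obtain ⟨x, hx⟩ := hX.1.1
    exact (hinc x hx).2 List.nil_prefix
  obtain ⟨W, hW, hwW, J, hJ, hJ2⟩ := exists_many F hF w u hw hu hune (w.length + 1)
  have key : ∀ j : J, ∃ s x t, x ∈ KStarSet X ∧ W = s ++ (x ++ (u ++ t)) ∧
      (s ++ x).length = j.1 ∧ s.length < w.length := by
    rintro ⟨j, hj⟩
    obtain ⟨q, t, h1, h2⟩ := hJ2 j hj
    obtain ⟨x, hx, s, rfl, hs⟩ := strip_suffix hX.1.2.1 _ q le_rfl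
    refine ⟨s, x, t, hx, by simp [h1], h2, ?_⟩
    by_contra hlt
    have hsF : s ∈ F := hF.1.2.1 _ _ hW ⟨[], x ++ (u ++ t), by simp [h1]⟩
    obtain ⟨y, hy, hsy⟩ := suffix_of_star hX.1.1 s hs (hL s hsF)
    have hws : w <+: s := List.prefix_of_prefix_length_le hwW ⟨x ++ (u ++ t), by simp [h1]⟩ (by omega)
    exact hwX y hy (hws.isInfix.trans hsy.isInfix)
  choose s x t hx hWe hlen hlt using key
  obtain ⟨i, j, hij, he⟩ := Fintype.exists_ne_map_eq_of_card_lt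
    (fun j : J => (⟨(s j).length, hlt j⟩ : Fin w.length)) (by simp [hJ])
  simp only [Fin.mk.injEq] at he
  have h1 := (hWe i).symm.trans (hWe j)
  obtain ⟨hs, h2⟩ := List.append_inj h1 he
  obtain ⟨l, hl, hxl⟩ := hx i
  obtain ⟨m, hm, hxm⟩ := hx j
  have hno : ∀ t, ∀ y ∈ X, ¬ y <+: u ++ t := by
    intro t y hy h
    rcases List.prefix_or_prefix_of_prefix h ⟨t, rfl⟩ with h | h
    · exact (hinc y hy).1 h
    · exact (hinc y hy).2 h
  have h3 := strip_unique hX.1 _ _ (hno (t i)) (hno (t j)) l m hl hm (by rw [← hxl, ← hxm]; exact h2)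
  apply hij
  apply Subtype.ext
  have h4 := congrArg List.length h2
  rw [h3] at h4
  rw [← hlen i, ← hlen j]
  simp at h4 ⊢
  omega

/-- Mirror image of a language. -/
def revL {A : Type*} (S : Set (List A)) : Set (List A) := {w | w.reverse ∈ S}

theorem revL_revL {A : Type*} (S : Set (List A)) : revL (revL S) = S := by
  ext w; simp [revL]

theorem star_revL {A : Type*} {X : Set (List A)} {w : List A} (h : w ∈ KStarSet X) :
    w.reverse ∈ KStarSet (revL X) := by
  obtain ⟨l, hl, rfl⟩ := h
  refine ⟨(l.map List.reverse).reverse, ?_, by rw [List.reverse_flatten]⟩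
  intro x hx
  rw [List.mem_reverse, List.mem_map] at hx
  obtain ⟨a, ha, rfl⟩ := hx
  simpa [revL] using hl a ha

theorem left_of_right_rev {A : Type*} {X F : Set (List A)}
    (h : RightFComplete (revL X) (revL F)) : LeftFComplete X F := by
  intro u hu
  obtain ⟨w, hw, h⟩ := h u.reverse (by simpa [revL] using hu)
  refine ⟨w.reverse, ?_, ?_⟩
  · simpa [revL_revL] using star_revL hw
  · rw [← List.reverse_prefix]; simpa using h

theorem right_of_left_rev {A : Type*} {X F : Set (List A)}
    (h : LeftFComplete (revL X) (revL F)) : RightFComplete X F := by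
  intro u hu
  obtain ⟨w, hw, h⟩ := h u.reverse (by simpa [revL] using hu)
  refine ⟨w.reverse, ?_, ?_⟩
  · simpa [revL_revL] using star_revL hw
  · rw [← List.reverse_suffix]; simpa using h

theorem nonempty_revL {A : Type*} {X : Set (List A)} (h : X.Nonempty) : (revL X).Nonempty := by
  obtain ⟨x, hx⟩ := h
  exact ⟨x.reverse, by simpa [revL] using hx⟩

theorem bifix_revL {A : Type*} {X : Set (List A)} (h : BifixCode X) : BifixCode (revL X) := by
  obtain ⟨⟨h1, h2, h3⟩, ⟨_, _, h4⟩⟩ := h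
  have hn : ∀ x ∈ revL X, x ≠ [] := by
    rintro x hx rfl
    exact h2 _ hx rfl
  refine ⟨⟨nonempty_revL h1, hn, ?_⟩, ⟨nonempty_revL h1, hn, ?_⟩⟩
  · intro x hx y hy h
    exact List.reverse_injective (h4 _ hx _ hy (List.reverse_suffix.2 h))
  · intro x hx y hy h
    exact List.reverse_injective (h3 _ hx _ hy (List.reverse_prefix.2 h))

theorem recurrent_revL {A : Type*} {F : Set (List A)} (h : Recurrent F) : Recurrent (revL F) := by
  obtain ⟨⟨h1, h2, h3⟩, h4⟩ := h
  refine ⟨⟨nonempty_revL h1, ?_, ?_⟩, ?_⟩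
  · intro u w hw hu
    exact h2 _ _ hw (List.reverse_infix.2 hu)
  · intro u hu
    obtain ⟨a, b, ha, hb⟩ := h3 _ hu
    exact ⟨b, a, by simpa [revL] using hb, by simpa [revL] using ha⟩
  · intro u hu v hv
    obtain ⟨w, hw⟩ := h4 _ hv _ hu
    exact ⟨w.reverse, by simpa [revL] using hw⟩

theorem thin_revL {A : Type*} {F X : Set (List A)} (h : ∃ w ∈ F, ∀ x ∈ X, ¬ w <:+: x) :
    ∃ w ∈ revL F, ∀ x ∈ revL X, ¬ w <:+: x := by
  obtain ⟨w, hw, h⟩ := h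
  refine ⟨w.reverse, by simpa [revL] using hw, fun x hx hn => h _ hx ?_⟩
  rw [← List.reverse_infix]; simpa using hn

theorem max_of_right {A : Type*} (F X : Set (List A)) (hXF : X ⊆ F) (hX : BifixCode X)
    (hR : RightFComplete X F) : FMaximalBifixCode X F := by
  refine ⟨hX, hXF, fun Y hY hXY hYF => Set.Subset.antisymm (fun y hy => ?_) hXY⟩
  obtain ⟨w, ⟨l, hl, rfl⟩, hyw⟩ := hR y (hYF hy)
  cases l with
  | nil => exact absurd (List.prefix_nil.1 (by simpa using hyw)) (hY.1.2.1 y hy)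
  | cons b l =>
    have hb : b ∈ X := hl b (by simp)
    rcases List.prefix_or_prefix_of_prefix hyw (by simp : b <+: (b :: l).flatten) with h | h
    · rw [hY.1.2.2 y hy b (hXY hb) h]; exact hb
    · rw [← hY.1.2.2 b (hXY hb) y hy h]; exact hb

theorem max_revL {A : Type*} {F X : Set (List A)} (h : FMaximalBifixCode X F) :
    FMaximalBifixCode (revL X) (revL F) := by
  obtain ⟨h1, h2, h3⟩ := h
  refine ⟨bifix_revL h1, fun x hx => h2 hx, fun Y hY hXY hYF => ?_⟩
  rw [← revL_revL Y, h3 (revL Y) (bifix_revL hY) ?_ ?_]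
  · intro x hx
    exact hXY (by simpa [revL] using hx)
  · intro x hx
    simpa [revL] using hYF hx

theorem right_of_max {A : Type*} (F X : Set (List A))
    (hF : Recurrent F) (hthin : ∃ w ∈ F, ∀ x ∈ X, ¬ w <:+: x)
    (hM : FMaximalBifixCode X F) : RightFComplete X F := by
  obtain ⟨hX, hXF, hmax⟩ := hM
  by_cases hL : LeftFComplete X F
  · exact right_of_left F X hF hX hthin hL
  by_contra hR
  obtain ⟨u, hu, hinc⟩ := exists_incomparable F X hF.1.2.1 hX.1 hR
  obtain ⟨v, hv, hincv⟩ := exists_incomparable (revL F) (revL X) (recurrent_revL hF).1.2.1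
    (bifix_revL hX).1 (fun h => hL (left_of_right_rev h))
  have hincv' : ∀ x ∈ X, ¬ x <:+ v.reverse ∧ ¬ v.reverse <:+ x := by
    intro x hx
    have := hincv x.reverse (by simpa [revL] using hx)
    rw [← List.reverse_prefix, ← List.reverse_prefix]
    simpa using this
  obtain ⟨w, hw⟩ := hF.2 u hu _ hv
  generalize hy : u ++ w ++ v.reverse = y at hw
  have hpu : u <+: y := ⟨w ++ v.reverse, by simp [← hy]⟩
  have hsv : v.reverse <:+ y := ⟨u ++ w, by simp [← hy]⟩
  have a1 : ∀ x ∈ X, ¬ x <+: y := by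
    intro x hx h
    rcases List.prefix_or_prefix_of_prefix h hpu with h | h
    · exact (hinc x hx).1 h
    · exact (hinc x hx).2 h
  have a2 : ∀ x ∈ X, ¬ y <+: x := fun x hx h => (hinc x hx).2 (hpu.trans h)
  have a3 : ∀ x ∈ X, ¬ x <:+ y := by
    intro x hx h
    rcases List.suffix_or_suffix_of_suffix h hsv with h | h
    · exact (hincv' x hx).1 h
    · exact (hincv' x hx).2 h
  have a4 : ∀ x ∈ X, ¬ y <:+ x := fun x hx h => (hincv' x hx).2 (hsv.trans h)
  have hne : ∀ x ∈ insert y X, x ≠ [] := by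
    intro x hx
    rcases hx with rfl | hx
    · rintro rfl
      obtain ⟨z, hz⟩ := hX.1.1
      exact a2 z hz List.nil_prefix
    · exact hX.1.2.1 x hx
  have hB : BifixCode (insert y X) := by
    refine ⟨⟨⟨y, by simp⟩, hne, ?_⟩, ⟨⟨y, by simp⟩, hne, ?_⟩⟩
    · rintro p (rfl | hp) q (rfl | hq) h
      · rfl
      · exact absurd h (a2 q hq)
      · exact absurd h (a1 p hp)
      · exact hX.1.2.2 p hp q hq h
    · rintro p (rfl | hp) q (rfl | hq) h
      · rfl
      · exact absurd h (a4 q hq)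
      · exact absurd h (a3 p hp)
      · exact hX.2.2.2 p hp q hq h
  have := hmax _ hB (Set.subset_insert _ _) (Set.insert_subset hw hXF)
  have hyX : y ∈ X := by rw [← this]; simp
  exact a1 y hyX List.prefix_rfl

/-- For a recurrent language `F` and a rational bifix code `X ⊆ F`,
the conditions `F`-maximal, left `F`-complete, right `F`-complete, and `F`-complete
are all equivalent. -/
theorem rational_bifix_maximal_iff_complete
    {A : Type*} [Fintype A] [Nonempty A] (F X : Set (List A))
    (hF : Recurrent F) (hXF : X ⊆ F) (hXrat : IsRational X) (hXbifix : BifixCode X) :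
    (FMaximalBifixCode X F ↔ LeftFComplete X F) ∧
    (LeftFComplete X F ↔ RightFComplete X F) ∧
    (RightFComplete X F ↔ FComplete X F) := by
  have hthin := thin_of_rational F X hF hXF hXrat hXbifix.1
  have hMR : FMaximalBifixCode X F → RightFComplete X F := right_of_max F X hF hthin
  have hML : FMaximalBifixCode X F → LeftFComplete X F := fun h =>
    left_of_right_rev (right_of_max _ _ (recurrent_revL hF) (thin_revL hthin) (max_revL h))
  have hRM : RightFComplete X F → FMaximalBifixCode X F := max_of_right F X hXF hXbifix
  have hLM : LeftFComplete X F → FMaximalBifixCode X F := fun h => by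
    have h1 : RightFComplete (revL X) (revL F) :=
      right_of_left_rev (by rw [revL_revL, revL_revL]; exact h)
    have h2 := max_revL (max_of_right (revL F) (revL X) (fun x hx => hXF hx)
      (bifix_revL hXbifix) h1)
    rwa [revL_revL, revL_revL] at h2
  exact ⟨⟨hML, hLM⟩, ⟨fun h => hMR (hLM h), fun h => hML (hRM h)⟩,
    ⟨fun h => ⟨h, hML (hRM h)⟩, fun h => h.1⟩⟩
end

section
/- Let A be a finite alphabet, let F ⊆ A* be a factorial language, and let X ⊆ F be a prefix code. Then X is an F-maximal prefix code if and only if X is right F-complete. -/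
/-- `X` is an `F`-maximal prefix code: a prefix code contained in `F` that is maximal
among prefix codes contained in `F`. -/
def FMaximalPrefixCode {A : Type*} (X F : Set (List A)) : Prop :=
  PrefixCode X ∧ X ⊆ F ∧ ∀ Y : Set (List A), PrefixCode Y → X ⊆ Y → Y ⊆ F → Y = X

/-- For a factorial language `F` and a prefix code `X ⊆ F`,
`X` is an `F`-maximal prefix code iff it is right `F`-complete. -/
theorem prefix_code_F_maximal_iff_right_F_complete
    {A : Type*} [Fintype A] [Nonempty A] (F X : Set (List A))
    (hF : Factorial F) (hX : PrefixCode X) (hXF : X ⊆ F) :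
    FMaximalPrefixCode X F ↔ RightFComplete X F := by
  constructor
  · rintro ⟨-, -, hmax⟩
    have comp : ∀ u ∈ F, u ≠ [] → ∃ x ∈ X, u <+: x ∨ x <+: u := by
      intro u hu hne
      by_contra hcon
      push Not at hcon
      have hY : PrefixCode (insert u X) := by
        refine ⟨⟨u, Set.mem_insert _ _⟩, ?_, ?_⟩
        · rintro x (rfl | hx)
          · exact hne
          · exact hX.2.1 x hx
        · rintro x (rfl | hx) y (rfl | hy) hxy
          · rfl
          · exact absurd hxy (hcon y hy).1
          · exact absurd hxy (hcon x hx).2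
          · exact hX.2.2 x hx y hy hxy
      have h := hmax _ hY (Set.subset_insert _ _) (Set.insert_subset hu hXF)
      have huX : u ∈ X := h ▸ Set.mem_insert u X
      exact (hcon u huX).1 (List.prefix_refl u)
    have main : ∀ n : ℕ, ∀ u ∈ F, u.length ≤ n → ∃ w ∈ KStarSet X, u <+: w := by
      intro n
      induction n with
      | zero =>
        intro u _ hl
        have : u = [] := List.length_eq_zero_iff.mp (by omega)
        subst this
        exact ⟨[], ⟨[], by simp, by simp⟩, List.prefix_refl _⟩
      | succ n ih =>
        intro u hu hl
        by_cases hne : u = []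
        · subst hne
          exact ⟨[], ⟨[], by simp, by simp⟩, List.prefix_refl _⟩
        obtain ⟨x, hx, h | ⟨v, rfl⟩⟩ := comp u hu hne
        · exact ⟨x, ⟨[x], by simpa using hx, by simp⟩, h⟩
        · have hxl : 0 < x.length := List.length_pos_iff.mpr (hX.2.1 x hx)
          rw [List.length_append] at hl
          obtain ⟨w, ⟨l, hl1, rfl⟩, t, ht⟩ :=
            ih v (hF v _ hu (List.suffix_append x v).isInfix) (by omega)
          refine ⟨x ++ l.flatten, ⟨x :: l, ?_, by simp⟩, t, ?_⟩
          · intro y hy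
            rcases List.mem_cons.mp hy with rfl | hy
            · exact hx
            · exact hl1 y hy
          · rw [List.append_assoc, ht]
    exact fun u hu => main u.length u hu le_rfl
  · intro hc
    refine ⟨hX, hXF, fun Y hY hXY hYF => Set.Subset.antisymm ?_ hXY⟩
    intro y hy
    obtain ⟨w, ⟨l, hl, rfl⟩, hp⟩ := hc y (hYF hy)
    cases l with
    | nil => exact absurd (by simpa using hp) (hY.2.1 y hy)
    | cons x l =>
      have hx : x ∈ X := hl x (by simp)
      have hxp : x <+: (x :: l).flatten := by simp
      rcases List.prefix_or_prefix_of_prefix hp hxp with h | h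
      · rw [hY.2.2 y hy x (hXY hx) h]; exact hx
      · rw [← hY.2.2 x (hXY hx) y hy h]; exact hx
end

section
/- Let A be a finite alphabet, let F ⊆ A* be a recurrent language, and let X be a rational F-complete bifix code (a rational bifix code contained in F that is both right F-complete and left F-complete). Then there exists a rational complete bifix code Z ⊆ A+ such that X = Z ∩ F. -/
namespace BifixExt

def R {A : Type*} (X : Set (List A)) (w : List A) : Prop := ∃ x ∈ X, x <+: w
def S {A : Type*} (X : Set (List A)) (w : List A) : Prop := ∃ x ∈ X, x <:+ w

open Classical in
noncomputable def L {A : Type*} (X : Set (List A)) : List A → ℕ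
  | [] => 1
  | a :: w => L X w + if R X (a :: w) then 0 else 1

variable {A : Type*} {X : Set (List A)}

lemma R_snoc (w : List A) (a : A) : R X (w ++ [a]) ↔ R X w ∨ w ++ [a] ∈ X := by
  constructor
  · rintro ⟨x, hx, h⟩
    rcases List.prefix_concat_iff.1 h with h | h
    · right; rw [← h]; exact hx
    · left; exact ⟨x, hx, h⟩
  · rintro (⟨x, hx, h⟩ | h)
    · exact ⟨x, hx, h.trans (List.prefix_append _ _)⟩
    · exact ⟨_, h, List.prefix_refl _⟩

lemma S_cons (w : List A) (a : A) : S X (a :: w) ↔ S X w ∨ a :: w ∈ X := by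
  constructor
  · rintro ⟨x, hx, h⟩
    rcases List.suffix_cons_iff.1 h with h | h
    · right; rw [← h]; exact hx
    · left; exact ⟨x, hx, h⟩
  · rintro (⟨x, hx, h⟩ | h)
    · exact ⟨x, hx, h.trans (List.suffix_cons _ _)⟩
    · exact ⟨_, h, List.suffix_refl _⟩

lemma R_of_prefix {u v : List A} (h : u <+: v) (hu : R X u) : R X v := by
  obtain ⟨x, hx, hp⟩ := hu
  exact ⟨x, hx, hp.trans h⟩

lemma S_of_suffix {u v : List A} (h : u <:+ v) (hu : S X u) : S X v := by
  obtain ⟨x, hx, hp⟩ := hu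
  exact ⟨x, hx, hp.trans h⟩

lemma not_R_of_mem (h : PrefixCode X) {w : List A} {a : A} (hw : w ++ [a] ∈ X) : ¬ R X w := by
  rintro ⟨x, hx, hp⟩
  have := h.2.2 x hx _ hw (hp.trans (List.prefix_append _ _))
  have h2 := hp.length_le
  rw [this] at h2
  simp at h2

lemma not_S_of_mem (h : SuffixCode X) {w : List A} {a : A} (hw : a :: w ∈ X) : ¬ S X w := by
  rintro ⟨x, hx, hp⟩
  have := h.2.2 x hx _ hw (hp.trans (List.suffix_cons _ _))
  have h2 := hp.length_le
  rw [this] at h2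
  simp at h2

lemma R_nil (h : PrefixCode X) : ¬ R X [] := by
  rintro ⟨x, hx, hp⟩
  exact h.2.1 x hx (List.prefix_nil.1 hp)

lemma S_nil (h : PrefixCode X) : ¬ S X [] := by
  rintro ⟨x, hx, hp⟩
  exact h.2.1 x hx (List.suffix_nil.1 hp)

lemma R_single (h : PrefixCode X) (a : A) : R X [a] ↔ [a] ∈ X := by
  have := R_snoc (X := X) [] a
  have := R_nil h
  simp_all

lemma S_single (h : PrefixCode X) (a : A) : S X [a] ↔ [a] ∈ X := by
  have := S_cons (X := X) [] a
  have := S_nil h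
  simp_all

open Classical in
lemma L_snoc (h : BifixCode X) (w : List A) (b : A) :
    L X (w ++ [b]) = L X w + if S X (w ++ [b]) then 0 else 1 := by
  induction w with
  | nil =>
    have h1 := R_single h.1 b
    have h2 := S_single h.1 b
    simp [L, h1, h2]
  | cons a w ih =>
    have e1 : L X (a :: w ++ [b]) = L X (w ++ [b]) + if R X (a :: w ++ [b]) then 0 else 1 := rfl
    have e2 : L X (a :: w) = L X (w) + if R X (a :: w) then 0 else 1 := rfl
    have h1 := R_snoc (X := X) (a :: w) b
    have h2 := S_cons (X := X) (w ++ [b]) a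
    have h3 := not_R_of_mem h.1 (w := a :: w) (a := b)
    have h4 := not_S_of_mem h.2 (w := w ++ [b]) (a := a)
    rw [e1, e2, ih]
    simp only [List.cons_append] at *
    split_ifs <;> first | omega | (exfalso; tauto)

def D (X : Set (List A)) (d : ℕ) (w : List A) : Prop := R X w ∨ d < L X w
def D' (X : Set (List A)) (d : ℕ) (w : List A) : Prop := S X w ∨ d < L X w

def Z (X : Set (List A)) (d : ℕ) : Set (List A) := {w | D X d w ∧ ¬ D X d w.dropLast}

lemma L_le_cons (w : List A) (a : A) : L X w ≤ L X (a :: w) := by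
  simp [L]

lemma L_le_snoc (h : BifixCode X) (w : List A) (a : A) : L X w ≤ L X (w ++ [a]) := by
  simp [L_snoc h]

lemma D_snoc (h : BifixCode X) {d : ℕ} (w : List A) (a : A) (hw : D X d w) : D X d (w ++ [a]) := by
  rcases hw with hw | hw
  · exact Or.inl (R_of_prefix (List.prefix_append _ _) hw)
  · exact Or.inr (hw.trans_le (L_le_snoc h w a))

lemma D_append (h : BifixCode X) {d : ℕ} (w v : List A) (hw : D X d w) : D X d (w ++ v) := by
  induction v using List.reverseRecOn with
  | nil => simpa using hw
  | append_singleton v a ih => rw [← List.append_assoc]; exact D_snoc h _ _ ih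

lemma D'_append {d : ℕ} (w v : List A) (hw : D' X d w) : D' X d (v ++ w) := by
  induction v with
  | nil => simpa using hw
  | cons a v ih =>
    rcases ih with ih | ih
    · exact Or.inl (S_of_suffix (List.suffix_cons _ _) ih)
    · exact Or.inr (ih.trans_le (L_le_cons _ a))

lemma D_nil (h : BifixCode X) {d : ℕ} (hd : 1 ≤ d) : ¬ D X d [] := by
  rintro (h1 | h1)
  · exact R_nil h.1 h1
  · simp [L] at h1; omega

lemma D'_nil (h : BifixCode X) {d : ℕ} (hd : 1 ≤ d) : ¬ D' X d [] := by
  rintro (h1 | h1)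
  · exact S_nil h.1 h1
  · simp [L] at h1; omega

lemma mem_Z' (h : BifixCode X) {d : ℕ} (hd : 1 ≤ d) (w : List A) :
    w ∈ Z X d ↔ D' X d w ∧ ¬ D' X d w.tail := by
  classical
  have n1 := D_nil h hd
  have n2 := D'_nil h hd
  rcases w with _ | ⟨a, w⟩
  · simp [Z, n1, n2]
  rcases List.eq_nil_or_concat w with rfl | ⟨w, b, rfl⟩
  · simp [Z, n1, n2]
    simp [D, D', R_single h.1, S_single h.1]
  · have hdl : (a :: (w ++ [b])).dropLast = a :: w := by
      rw [← List.cons_append, List.dropLast_concat]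
    have h1 := R_snoc (X := X) (a :: w) b
    have h2 := S_cons (X := X) (w ++ [b]) a
    have h3 := not_R_of_mem h.1 (w := a :: w) (a := b)
    have h4 := not_S_of_mem h.2 (w := w ++ [b]) (a := a)
    have e1 : L X (a :: (w ++ [b])) = L X (w ++ [b]) + if R X (a :: (w ++ [b])) then 0 else 1 := rfl
    have e2 : L X (a :: w) = L X (w) + if R X (a :: w) then 0 else 1 := rfl
    have e3 := L_snoc h w b
    have e4 := L_snoc h (a :: w) b
    simp only [List.cons_append, List.concat_eq_append] at *
    simp only [Z, Set.mem_setOf_eq, hdl, List.tail_cons, D, D']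
    grind

lemma mem_Z_prefix (h : BifixCode X) {d : ℕ} (hd : 1 ≤ d) (w : List A) (hw : D X d w) :
    ∃ z ∈ Z X d, z <+: w := by
  induction w using List.reverseRecOn with
  | nil => exact absurd hw (D_nil h hd)
  | append_singleton w a ih =>
    by_cases h1 : D X d w
    · obtain ⟨z, hz, hp⟩ := ih h1
      exact ⟨z, hz, hp.trans (List.prefix_append _ _)⟩
    · exact ⟨_, ⟨hw, by simpa using h1⟩, List.prefix_refl _⟩

lemma mem_Z_suffix (h : BifixCode X) {d : ℕ} (hd : 1 ≤ d) (w : List A) (hw : D' X d w) :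
    ∃ z ∈ Z X d, z <:+ w := by
  induction w with
  | nil => exact absurd hw (D'_nil h hd)
  | cons a w ih =>
    by_cases h1 : D' X d w
    · obtain ⟨z, hz, hp⟩ := ih h1
      exact ⟨z, hz, hp.trans (List.suffix_cons _ _)⟩
    · exact ⟨_, (mem_Z' h hd _).2 ⟨hw, by simpa using h1⟩, List.suffix_refl _⟩

lemma Z_bifix (h : BifixCode X) {d : ℕ} (hd : 1 ≤ d) (hne : (Z X d).Nonempty) :
    BifixCode (Z X d) := by
  have hnn : ∀ x ∈ Z X d, x ≠ [] := by
    rintro x hx rfl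
    exact D_nil h hd hx.1
  refine ⟨⟨hne, hnn, ?_⟩, ⟨hne, hnn, ?_⟩⟩
  · rintro x hx y hy ⟨t, rfl⟩
    rcases List.eq_nil_or_concat t with rfl | ⟨t, b, rfl⟩
    · simp
    · exfalso
      apply hy.2
      rw [List.concat_eq_append, ← List.append_assoc, List.dropLast_concat]
      exact D_append h _ _ hx.1
  · rintro x hx y hy ⟨t, rfl⟩
    rcases t with _ | ⟨b, t⟩
    · simp
    · exfalso
      rw [mem_Z' h hd] at hx hy
      exact hy.2 (D'_append _ _ hx.1)

lemma right_complete (Y : Set (List A)) (N : List A → ℕ) (d : ℕ) (hne : Y.Nonempty)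
    (hnn : ∀ y ∈ Y, y ≠ []) (mono : ∀ a w, N w ≤ N (a :: w))
    (hN : ∀ a w, (∀ z ∈ Y, ¬ z <+: a :: w) → N w < N (a :: w) ∧ N (a :: w) ≤ d) :
    RightFComplete Y Set.univ := by
  have mono' : ∀ u w, N w ≤ N (u ++ w) := by
    intro u w
    induction u with
    | nil => simp
    | cons a u ih => exact ih.trans (mono _ _)
  have comp : ∀ u, (∃ z ∈ Y, z <+: u) ∨ (∃ z ∈ Y, u <+: z) := by
    intro u
    by_contra! hc
    rcases u with _ | ⟨a, u⟩
    · obtain ⟨y, hy⟩ := hne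
      exact hc.2 y hy List.nil_prefix
    have key : ∀ v, N v < N (a :: u ++ v) ∧ N (a :: u ++ v) ≤ d := by
      intro v
      have := hN a (u ++ v) (by
        intro z hz hp
        rcases List.prefix_or_prefix_of_prefix hp (List.prefix_append (a :: u) v) with h | h
        · exact hc.1 z hz h
        · exact hc.2 z hz h)
      exact ⟨(mono' u v).trans_lt this.1, this.2⟩
    have : ∀ n : ℕ, ∃ v, n ≤ N v := by
      intro n
      induction n with
      | zero => exact ⟨[], by simp⟩
      | succ n ih =>
        obtain ⟨v, hv⟩ := ih
        exact ⟨_, hv.trans_lt (key v).1⟩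
    obtain ⟨v, hv⟩ := this (d + 1)
    have := key v
    omega
  have main : ∀ n : ℕ, ∀ u : List A, u.length ≤ n → ∃ w ∈ KStarSet Y, u <+: w := by
    intro n
    induction n with
    | zero =>
      intro u hu
      have : u = [] := by simpa using hu
      subst this
      exact ⟨[], ⟨[], by simp, by simp⟩, List.nil_prefix⟩
    | succ n ih =>
      intro u hu
      rcases comp u with ⟨z, hz, t, rfl⟩ | ⟨z, hz, hp⟩
      · have := List.length_pos_iff.2 (hnn z hz)
        simp at hu
        obtain ⟨w, ⟨l, hl, rfl⟩, hw⟩ := ih t (by omega)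
        refine ⟨z ++ l.flatten, ⟨z :: l, ?_, by simp⟩, ?_⟩
        · simpa using ⟨hz, hl⟩
        · exact (List.prefix_append_right_inj z).2 hw
      · exact ⟨z, ⟨[z], by simpa using hz, by simp⟩, hp⟩
  exact fun u _ => main _ u le_rfl

lemma left_of_right (Y : Set (List A)) (h : RightFComplete {w | w.reverse ∈ Y} Set.univ) :
    LeftFComplete Y Set.univ := by
  intro u _
  obtain ⟨w, ⟨l, hl, rfl⟩, hw⟩ := h u.reverse trivial
  refine ⟨l.flatten.reverse, ⟨(l.map List.reverse).reverse, ?_, ?_⟩, ?_⟩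
  · intro x hx
    simp at hx
    simpa using hl _ hx
  · simp [List.reverse_flatten]
  · rw [← List.reverse_prefix]; simpa using hw

lemma Z_complete (h : BifixCode X) {d : ℕ} (hd : 1 ≤ d) (hne : (Z X d).Nonempty) :
    FComplete (Z X d) Set.univ := by
  have hb := Z_bifix h hd hne
  constructor
  · refine right_complete _ (L X) d hne hb.1.2.1 (fun a w => L_le_cons w a) ?_
    intro a w hz
    have hD : ¬ D X d (a :: w) := by
      intro hD
      obtain ⟨z, hz1, hz2⟩ := mem_Z_prefix h hd _ hD
      exact hz z hz1 hz2
    simp only [D, not_or, not_lt] at hD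
    refine ⟨?_, hD.2⟩
    simp [L, hD.1]
  · apply left_of_right
    refine right_complete _ (fun w => L X w.reverse) d ?_ ?_ ?_ ?_
    · obtain ⟨z, hz⟩ := hne
      exact ⟨z.reverse, by simpa using hz⟩
    · rintro y hy rfl
      exact hb.1.2.1 _ hy rfl
    · intro a w
      simpa using L_le_snoc h w.reverse a
    · intro a w hz
      have hD : ¬ D' X d (w.reverse ++ [a]) := by
        intro hD
        obtain ⟨z, hz1, hz2⟩ := mem_Z_suffix h hd _ hD
        refine hz z.reverse (by simpa using hz1) ?_
        rw [← List.reverse_suffix]; simpa using hz2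
      simp only [D', not_or, not_lt] at hD
      simp only [List.reverse_cons]
      refine ⟨?_, hD.2⟩
      simp [L_snoc h, hD.1]

lemma rational_of (P : List A → Prop) {σ : Type} [Finite σ] (φ : List A → σ) (f : σ → A → σ)
    (hf : ∀ w a, φ (w ++ [a]) = f (φ w) a) (acc : Set σ) (hP : ∀ w, P w ↔ φ w ∈ acc) :
    IsRational {w | P w} := by
  refine ⟨σ, Fintype.ofFinite σ, ⟨f, φ [], acc⟩, ?_⟩
  intro w
  have : ∀ w, (DFA.mk f (φ []) acc).eval w = φ w := by
    intro w
    induction w using List.reverseRecOn with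
    | nil => rfl
    | append_singleton w a ih => rw [DFA.eval_append_singleton, ih, hf]
  rw [DFA.mem_accepts, this, Set.mem_setOf_eq, hP]

open Classical in
lemma Z_rational (h : BifixCode X) (hr : IsRational X) (d : ℕ) (hd : 1 ≤ d) :
    IsRational (Z X d) := by
  obtain ⟨σ, _, M, hM⟩ := hr
  have hM' : ∀ w, w ∈ X ↔ M.eval w ∈ M.accept := fun w => by rw [← hM, DFA.mem_accepts]
  let Q : List A → Set σ := fun w => {q | ∃ s, s <:+ w ∧ M.eval s = q}
  have hQ : ∀ w a, Q (w ++ [a]) = insert M.start ((fun q => M.step q a) '' Q w) := by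
    intro w a
    ext q
    constructor
    · rintro ⟨s, hs, rfl⟩
      rcases List.eq_nil_or_concat s with rfl | ⟨s, b, rfl⟩
      · left; rfl
      · right
        obtain ⟨t, ht⟩ := hs
        rw [List.concat_eq_append, ← List.append_assoc] at ht
        obtain ⟨h1, h2⟩ := List.append_inj' ht rfl
        simp at h2
        subst h2
        exact ⟨M.eval s, ⟨s, ⟨t, h1⟩, rfl⟩, by simp⟩
    · rintro (rfl | ⟨_, ⟨s, ⟨t, rfl⟩, rfl⟩, rfl⟩)
      · exact ⟨[], List.nil_suffix, rfl⟩
      · exact ⟨s ++ [a], ⟨t, by simp⟩, by simp⟩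
  have hS : ∀ w, S X w ↔ ∃ q ∈ Q w, q ∈ M.accept := by
    intro w
    constructor
    · rintro ⟨x, hx, hs⟩
      exact ⟨_, ⟨x, hs, rfl⟩, (hM' x).1 hx⟩
    · rintro ⟨_, ⟨x, hs, rfl⟩, hx⟩
      exact ⟨x, (hM' x).2 hx, hs⟩
  let cap : ℕ → Fin (d + 2) := fun n => ⟨min n (d + 1), by omega⟩
  let stepc : Fin (d + 2) → Set σ → Fin (d + 2) := fun c Q' =>
    cap (c.1 + if ∃ q ∈ Q', q ∈ M.accept then 0 else 1)
  let φ : List A → σ × Prop × Set σ × Fin (d + 2) × Prop := fun w =>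
    (M.eval w, R X w, Q w, cap (L X w), w ∈ Z X d)
  refine rational_of (fun w => w ∈ Z X d) φ
    (fun s a => (M.step s.1 a, s.2.1 ∨ M.step s.1 a ∈ M.accept,
      insert M.start ((fun q => M.step q a) '' s.2.2.1),
      stepc s.2.2.2.1 (insert M.start ((fun q => M.step q a) '' s.2.2.1)),
      ((s.2.1 ∨ M.step s.1 a ∈ M.accept) ∨
        d < (stepc s.2.2.2.1 (insert M.start ((fun q => M.step q a) '' s.2.2.1))).1) ∧
        ¬ (s.2.1 ∨ d < s.2.2.2.1.1))) ?_ {s | s.2.2.2.2} (fun w => Iff.rfl)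
  intro w a
  have hc : cap (L X (w ++ [a])) = stepc (cap (L X w)) (Q (w ++ [a])) := by
    simp only [stepc, cap, ← hS, L_snoc h, Fin.mk.injEq]
    split_ifs <;> omega
  have hRs : R X (w ++ [a]) ↔ R X w ∨ M.step (M.eval w) a ∈ M.accept := by
    rw [R_snoc, hM', DFA.eval_append_singleton]
  have hcap : ∀ n, d < (cap n).1 ↔ d < n := by
    intro n; simp only [cap]; omega
  simp only [φ, ← hQ, ← hc, ← hRs, hcap, DFA.eval_append_singleton]
  simp [Z, D]

lemma L_bound (h : BifixCode X) {σ : Type} [Fintype σ] (M : DFA A σ)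
    (hM : ∀ w, w ∈ X ↔ M.eval w ∈ M.accept) (w : List A)
    (hw : ∀ s, s <:+ w → ¬ R X s → ∃ x ∈ X, s <+: x) :
    L X w ≤ {q | ∃ s, s <:+ w ∧ ¬ R X s ∧ M.eval s = q}.ncard := by
  classical
  induction w with
  | nil =>
    have : {q | ∃ s, s <:+ ([] : List A) ∧ ¬ R X s ∧ M.eval s = q} = {M.start} := by
      ext q
      have := R_nil h.1
      simp [this, eq_comm]
    rw [this]; simp [L]
  | cons a w ih =>
    have ih := ih (fun s hs => hw s (hs.trans (List.suffix_cons _ _)))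
    by_cases hR : R X (a :: w)
    · simp only [L, hR, if_true, add_zero]
      refine ih.trans (Set.ncard_le_ncard ?_ (Set.toFinite _))
      rintro q ⟨s, hs, h2⟩
      exact ⟨s, hs.trans (List.suffix_cons _ _), h2⟩
    · simp only [L, hR, if_false]
      have hn : M.eval (a :: w) ∉ {q | ∃ s, s <:+ w ∧ ¬ R X s ∧ M.eval s = q} := by
        rintro ⟨s, hs, -, he⟩
        obtain ⟨x, hx, t, rfl⟩ := hw _ (List.suffix_refl _) hR
        have hst : s ++ t ∈ X := by
          rw [hM] at hx ⊢
          have e : M.eval (s ++ t) = M.eval (a :: w ++ t) := by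
            simp only [DFA.eval, DFA.evalFrom_of_append]
            exact congrArg (fun q => M.evalFrom q t) he
          rwa [e]
        have hsuf : s ++ t <:+ a :: w ++ t := by
          obtain ⟨r, rfl⟩ := hs
          exact ⟨a :: r, by simp⟩
        have := congrArg List.length (h.2.2.2 _ hst _ hx hsuf)
        have := hs.length_le
        simp at *
        omega
      have := Set.ncard_insert_of_notMem hn (Set.toFinite _)
      refine le_trans (by omega) (this.symm.le.trans (Set.ncard_le_ncard ?_ (Set.toFinite _)))
      rintro q (rfl | ⟨s, hs, h2⟩)
      · exact ⟨_, List.suffix_refl _, hR, rfl⟩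
      · exact ⟨s, hs.trans (List.suffix_cons _ _), h2⟩

lemma L_bdd {F : Set (List A)} (h : BifixCode X) (hr : IsRational X) (hF : Factorial F)
    (hc : RightFComplete X F) : ∃ d, 1 ≤ d ∧ ∀ w ∈ F, L X w ≤ d := by
  obtain ⟨σ, _, M, hM⟩ := hr
  have hM' : ∀ w, w ∈ X ↔ M.eval w ∈ M.accept := fun w => by rw [← hM, DFA.mem_accepts]
  refine ⟨Nat.card σ + 1, by omega, fun w hw => ?_⟩
  refine (L_bound h M hM' w ?_).trans ((Set.ncard_le_card _).trans (Nat.le_succ _))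
  intro s hs hR
  obtain ⟨_, ⟨l, hl, rfl⟩, hp⟩ := hc s (hF s w hw hs.isInfix)
  rcases l with _ | ⟨x, l⟩
  · obtain ⟨y, hy⟩ := h.1.1
    have : s = [] := by simpa using hp
    exact ⟨y, hy, this ▸ List.nil_prefix⟩
  · have hx : x ∈ X := hl x (by simp)
    rcases List.prefix_or_prefix_of_prefix hp (by simp : x <+: (x :: l).flatten) with h1 | h1
    · exact ⟨x, hx, h1⟩
    · exact absurd ⟨x, hx, h1⟩ hR

lemma Z_inter {F : Set (List A)} (h : BifixCode X) (hF : Factorial F) (hXF : X ⊆ F) {d : ℕ}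
    (hb : ∀ w ∈ F, L X w ≤ d) : X = Z X d ∩ F := by
  have hD : ∀ w ∈ F, D X d w ↔ R X w := by
    intro w hw
    have := hb w hw
    simp only [D]
    constructor
    · rintro (h | h)
      · exact h
      · omega
    · exact Or.inl
  have hm : ∀ w ∈ F, w ∈ Z X d ↔ w ∈ X := by
    intro w hw
    have hw' := hF _ w hw (List.dropLast_prefix w).isInfix
    simp only [Z, Set.mem_setOf_eq, hD _ hw, hD _ hw']
    rcases List.eq_nil_or_concat w with rfl | ⟨w, b, rfl⟩
    · have h1 := R_nil h.1
      have h2 : [] ∉ X := fun h2 => h.1.2.1 _ h2 rfl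
      simp [h1, h2]
    · rw [List.concat_eq_append, List.dropLast_concat, R_snoc]
      have := not_R_of_mem h.1 (w := w) (a := b)
      tauto
  ext w
  exact ⟨fun hw => ⟨(hm w (hXF hw)).2 hw, hXF hw⟩, fun hw => (hm w hw.2).1 hw.1⟩

end BifixExt

/-- If `F` is recurrent and `X` is a rational `F`-complete bifix code,
then `X = Z ∩ F` for some rational complete bifix code `Z`. -/
theorem rational_F_complete_bifix_comes_from_complete_bifix
    {A : Type*} [Fintype A] [Nonempty A] (F X : Set (List A))
    (hF : Recurrent F) (hXF : X ⊆ F) (hXrat : IsRational X)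
    (hXbifix : BifixCode X) (hXcomp : FComplete X F) :
    ∃ Z : Set (List A), IsRational Z ∧ BifixCode Z ∧ FComplete Z Set.univ ∧
      X = Z ∩ F := by
  obtain ⟨d, hd, hb⟩ := BifixExt.L_bdd hXbifix hXrat hF.1.2.1 hXcomp.1
  have hX := BifixExt.Z_inter hXbifix hF.1.2.1 hXF hb
  have hne : (BifixExt.Z X d).Nonempty := by
    obtain ⟨x, hx⟩ := hXbifix.1.1
    rw [hX] at hx
    exact ⟨x, hx.1⟩
  exact ⟨BifixExt.Z X d, BifixExt.Z_rational hXbifix hXrat d hd,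
    BifixExt.Z_bifix hXbifix hd hne, BifixExt.Z_complete hXbifix hd hne, hX⟩
end

section
/- Let M be a compact monoid and let K ⊆ M be a nonempty closed subset. Then for every u ∈ K there exists v ∈ K such that v ≤_J u and v is ≤_J-minimal in K, i.e., every w ∈ K with w ≤_J v satisfies v ≤_J w. -/
/-- The `≤_J` quasi-order on a monoid: `x ≤_J y` iff `y` is a factor of `x`,
i.e. `x ∈ M y M`. -/
def leJ {M : Type*} [Monoid M] (x y : M) : Prop :=
  ∃ p q : M, x = p * y * q

/-- In a compact monoid, every element of a nonempty closed subset `K`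
has a `≤_J`-minimal element of `K` below it. -/
theorem exists_leJ_minimal_in_closed_subset
    {M : Type*} [Monoid M] [TopologicalSpace M] [CompactSpace M] [T2Space M]
    [ContinuousMul M] (K : Set M) (hKne : K.Nonempty) (hKcl : IsClosed K) :
    ∀ u ∈ K, ∃ v ∈ K, leJ v u ∧ ∀ w ∈ K, leJ w v → leJ v w := by
  intro u hu
  have refl : ∀ x : M, leJ x x := fun x => ⟨1, 1, by simp⟩
  have trans : ∀ x y z : M, leJ x y → leJ y z → leJ x z := by
    rintro x y z ⟨p, q, rfl⟩ ⟨p', q', rfl⟩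
    exact ⟨p * p', q' * q, by simp only [mul_assoc]⟩
  have closed : ∀ y : M, IsClosed {x : M | leJ x y} := by
    intro y
    have h : {x : M | leJ x y} = Set.range (fun pq : M × M => pq.1 * y * pq.2) := by
      ext x
      constructor
      · rintro ⟨p, q, h⟩
        exact ⟨(p, q), h.symm⟩
      · rintro ⟨⟨p, q⟩, h⟩
        exact ⟨p, q, h.symm⟩
    rw [h]
    exact (isCompact_range (by fun_prop)).isClosed
  have : Nonempty {x : M // x ∈ K ∧ leJ x u} := ⟨⟨u, hu, refl u⟩⟩
  obtain ⟨⟨v, hvK, hvu⟩, hv⟩ := exists_maximal_of_nonempty_chains_bounded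
    (α := {x : M // x ∈ K ∧ leJ x u}) (r := fun a b => leJ b.1 a.1)
    (by
      intro c hc hcne
      have : Nonempty c := hcne.to_subtype
      have hcl : ∀ i : c, IsClosed (K ∩ {x : M | leJ x i.1.1}) :=
        fun i => hKcl.inter (closed _)
      obtain ⟨x, hx⟩ := IsCompact.nonempty_iInter_of_directed_nonempty_isCompact_isClosed
        (fun i : c => K ∩ {x : M | leJ x i.1.1})
        (by
          intro i j
          by_cases hij : i.1 = j.1
          · exact ⟨i, fun x hx => hx, fun x hx => by
              rw [← Subtype.ext hij]; exact hx⟩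
          · rcases hc i.2 j.2 hij with h | h
            · exact ⟨j, fun x hx => ⟨hx.1, trans _ _ _ hx.2 h⟩, fun x hx => hx⟩
            · exact ⟨i, fun x hx => hx, fun x hx => ⟨hx.1, trans _ _ _ hx.2 h⟩⟩)
        (fun i => ⟨i.1.1, i.1.2.1, refl _⟩)
        (fun i => (hcl i).isCompact) hcl
      rw [Set.mem_iInter] at hx
      obtain ⟨a, ha⟩ := hcne
      exact ⟨⟨x, (hx ⟨a, ha⟩).1, trans _ _ _ (hx ⟨a, ha⟩).2 a.2.2⟩,
        fun b hb => (hx ⟨b, hb⟩).2⟩)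
    (fun h1 h2 => trans _ _ _ h2 h1)
  exact ⟨v, hvK, hvu, fun w hw hwv => hv ⟨w, hw, trans _ _ _ hwv hvu⟩ hwv⟩
end

section
/- Every compact monoid M is stable: for all x, y ∈ M, if x ∈ yM and x, y generate the same two-sided principal ideal (x ∈ MyM and y ∈ MxM), then xM = yM; dually, if x ∈ My and x ∈ MyM and y ∈ MxM, then Mx = My. -/
theorem stable_aux {M : Type*} [Monoid M] [TopologicalSpace M] [CompactSpace M] [T2Space M]
    [ContinuousMul M] (y p b : M) (h : y = p * y * b) : ∃ c, y = y * (b * c) := by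
  let S : Set (M × Mᵐᵒᵖ) := {w | w.1 * y * w.2.unop = y} ∩ {w | w.2.unop ∈ Set.range (fun c => b * c)}
  have hc : IsClosed S := by
    apply IsClosed.inter
    · exact isClosed_eq (by fun_prop) continuous_const
    · exact (isCompact_range (continuous_const_mul b)).isClosed.preimage
        (MulOpposite.continuous_unop.comp continuous_snd)
  obtain ⟨⟨e, f⟩, ⟨h1, ⟨c, hf⟩⟩, hi⟩ := exists_idempotent_in_compact_subsemigroup
    (M := M × Mᵐᵒᵖ) (fun r => continuous_mul_const r) S
    ⟨(p, MulOpposite.op b), h.symm, 1, by simp⟩ hc.isCompact (by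
      rintro ⟨u, v⟩ ⟨h1, c, h2⟩ ⟨u', v'⟩ ⟨h1', c', h2'⟩
      simp only [Set.mem_setOf_eq] at h1 h1' h2 h2'
      refine ⟨?_, c' * v.unop, ?_⟩
      · change u * u' * y * (v'.unop * v.unop) = y
        calc _ = u * (u' * y * v'.unop) * v.unop := by simp only [mul_assoc]
          _ = y := by rw [h1', h1]
      · change b * (c' * v.unop) = v'.unop * v.unop
        rw [← h2', mul_assoc])
  have hff : f.unop * f.unop = f.unop := congrArg (fun w : M × Mᵐᵒᵖ => w.2.unop) hi
  simp only [Set.mem_setOf_eq] at h1 hf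
  refine ⟨c, ?_⟩
  rw [hf]
  calc y = e * y * f.unop := h1.symm
    _ = e * y * f.unop * f.unop := by rw [mul_assoc _ f.unop, hff]
    _ = _ := by rw [h1]

theorem stable_aux_dual {M : Type*} [Monoid M] [TopologicalSpace M] [CompactSpace M] [T2Space M]
    [ContinuousMul M] (y a q : M) (h : y = a * y * q) : ∃ c, y = c * a * y := by
  obtain ⟨c, hc⟩ := stable_aux (MulOpposite.op y) (MulOpposite.op q) (MulOpposite.op a)
    (MulOpposite.unop_injective (by simpa [mul_assoc] using h))
  exact ⟨c.unop, congrArg MulOpposite.unop hc⟩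

/-- Every compact monoid is stable: if `x ∈ yM` and `x`, `y` generate
the same two-sided principal ideal, then `xM = yM`; dually for left ideals. -/
theorem compact_monoid_is_stable
    {M : Type*} [Monoid M] [TopologicalSpace M] [CompactSpace M] [T2Space M]
    [ContinuousMul M] (x y : M) :
    ((∃ m : M, x = y * m) → (∃ p q : M, x = p * y * q) → (∃ p q : M, y = p * x * q) →
      {z : M | ∃ m : M, z = x * m} = {z : M | ∃ m : M, z = y * m}) ∧
    ((∃ m : M, x = m * y) → (∃ p q : M, x = p * y * q) → (∃ p q : M, y = p * x * q) →
      {z : M | ∃ m : M, z = m * x} = {z : M | ∃ m : M, z = m * y}) := by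
  constructor
  · rintro ⟨m, hm⟩ - ⟨p, q, hy⟩
    obtain ⟨c, hc⟩ := stable_aux y p (m * q) (by simpa [hm, mul_assoc] using hy)
    ext z
    constructor
    · rintro ⟨k, rfl⟩
      exact ⟨m * k, by rw [hm, mul_assoc]⟩
    · rintro ⟨k, rfl⟩
      refine ⟨q * c * k, ?_⟩
      calc y * k = y * (m * q * c) * k := by rw [← hc]
        _ = _ := by rw [hm]; simp only [mul_assoc]
  · rintro ⟨m, hm⟩ - ⟨p, q, hy⟩
    obtain ⟨c, hc⟩ := stable_aux_dual y (p * m) q (by simpa [hm, mul_assoc] using hy)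
    ext z
    constructor
    · rintro ⟨k, rfl⟩
      exact ⟨k * m, by rw [hm, mul_assoc]⟩
    · rintro ⟨k, rfl⟩
      refine ⟨k * c * p, ?_⟩
      calc k * y = k * (c * (p * m) * y) := by rw [← hc]
        _ = _ := by rw [hm]; simp only [mul_assoc]
end

section
/- Let A be a finite alphabet and let S ⊆ A^ℤ be a subshift. Then S is irreducible, i.e., there exists x ∈ S whose forward orbit {σ_A^n(x) : n ∈ ℕ} is dense in S, if and only if the language B(S) is recurrent. -/
/-- The shift map on `A^ℤ`. -/
def shiftMap (A : Type*) : (ℤ → A) → (ℤ → A) := fun x i => x (i + 1)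

/-- A subshift of `A^ℤ`: a nonempty closed shift-invariant subset
(`ℤ → A` carries the product topology). -/
def IsSubshift {A : Type*} [TopologicalSpace A] (S : Set (ℤ → A)) : Prop :=
  S.Nonempty ∧ IsClosed S ∧ shiftMap A '' S = S

/-- The map sending `x ∈ A^ℤ` to the sequence of its consecutive blocks of length `n`,
an element of `(Aⁿ)^ℤ`. -/
def higherPowerMap (A : Type*) (n : ℕ) : (ℤ → A) → (ℤ → (Fin n → A)) :=
  fun x k j => x ((n : ℤ) * k + (j : ℤ))

/-- Two subshifts are conjugate if there is an equivariant homeomorphism between them. -/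
def Conjugate {A B : Type*} [TopologicalSpace A] [TopologicalSpace B]
    (S : Set (ℤ → A)) (T : Set (ℤ → B)) : Prop :=
  ∃ φ : S ≃ₜ T, ∀ (x : ℤ → A) (hx : x ∈ S) (hx' : shiftMap A x ∈ S),
    (φ ⟨shiftMap A x, hx'⟩ : ℤ → B) = shiftMap B (φ ⟨x, hx⟩)

/-- The set of blocks (finite contiguous subwords, including the empty word) of a
bi-infinite sequence `x ∈ A^ℤ`. -/
def blocksOf {A : Type*} (x : ℤ → A) : Set (List A) :=
  {w | ∃ (n : ℕ) (i : ℤ), w = (List.range n).map fun j => x (i + (j : ℤ))}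

/-- The language of blocks of a set `S ⊆ A^ℤ`. -/
def blocksOfSet {A : Type*} (S : Set (ℤ → A)) : Set (List A) :=
  {w | ∃ x ∈ S, w ∈ blocksOf x}

/-- The set of bi-infinite sequences all of whose blocks lie in `F`. -/
def subshiftOfLang {A : Type*} (F : Set (List A)) : Set (ℤ → A) :=
  {x | blocksOf x ⊆ F}

namespace IrrAux

def blk {A : Type*} (x : ℤ → A) (i : ℤ) (n : ℕ) : List A :=
  (List.range n).map fun j : ℕ => x (i + (j : ℤ))

def sh {A : Type*} (k : ℤ) (x : ℤ → A) : ℤ → A := fun i => x (i + k)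

theorem blk_length {A : Type*} (x : ℤ → A) (i : ℤ) (n : ℕ) : (blk x i n).length = n := by
  simp [blk]

theorem blk_add {A : Type*} (x : ℤ → A) (i : ℤ) (m n : ℕ) :
    blk x i (m + n) = blk x i m ++ blk x (i + m) n := by
  simp only [blk, List.range_add, List.map_append, List.map_map]
  congr 1
  apply List.map_congr_left
  intro j _
  simp [add_assoc]

theorem blk_split {A : Type*} {x : ℤ → A} {i : ℤ} {n : ℕ} {a b : List A}
    (h : a ++ b = blk x i n) : a = blk x i a.length ∧ b = blk x (i + a.length) b.length := by
  have hn : n = a.length + b.length := by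
    have := congrArg List.length h
    rw [blk_length] at this
    simpa using this.symm
  rw [hn, blk_add] at h
  exact List.append_inj h (by rw [blk_length])

theorem blk_eq_iff {A : Type*} (x y : ℤ → A) (i k : ℤ) (n : ℕ) :
    blk x i n = blk y k n ↔ ∀ j : ℕ, j < n → x (i + j) = y (k + j) := by
  simp [blk, List.map_inj_left]

theorem blk_sh {A : Type*} (x : ℤ → A) (i k : ℤ) (n : ℕ) :
    blk (sh k x) i n = blk x (i + k) n := by
  rw [blk_eq_iff]
  intro j _
  simp only [sh]
  congr 1
  ring

theorem mem_blocks {A : Type*} {S : Set (ℤ → A)} {w : List A} :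
    w ∈ blocksOfSet S ↔ ∃ x ∈ S, ∃ (n : ℕ) (i : ℤ), w = blk x i n := by
  have key : ∀ (x : ℤ → A) (i : ℤ) (n : ℕ),
      ((List.range n).map fun j => x (i + (j : ℤ))) = blk x i n := by
    intro x i n
    simp only [blk, List.pure_def, List.bind_eq_flatMap]
    induction List.range n with
    | nil => rfl
    | cons a l ih => simpa using ih
  simp only [blocksOfSet, blocksOf, Set.mem_setOf_eq, key]

theorem iter {A : Type*} (n : ℕ) (x : ℤ → A) : (shiftMap A)^[n] x = sh n x := by
  induction n with
  | zero => funext i; simp [sh]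
  | succ k ih =>
    rw [Function.iterate_succ_apply', ih]
    funext i
    simp only [sh, shiftMap]
    congr 1
    push_cast
    ring

theorem sh_mem {A : Type*} {S : Set (ℤ → A)} (h : shiftMap A '' S = S) (k : ℤ)
    {x : ℤ → A} (hx : x ∈ S) : sh k x ∈ S := by
  have h1 : ∀ y ∈ S, sh 1 y ∈ S := fun y hy => by
    rw [← h]; exact ⟨y, hy, rfl⟩
  have h2 : ∀ y ∈ S, sh (-1) y ∈ S := fun y hy => by
    rw [← h] at hy
    obtain ⟨z, hz, rfl⟩ := hy
    have : sh (-1) (shiftMap A z) = z := by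
      funext i; simp [sh, shiftMap]
    rwa [this]
  induction k using Int.induction_on with
  | zero => have : sh 0 x = x := by funext i; simp [sh]
            rwa [this]
  | succ n ih =>
    have : sh ((n : ℤ) + 1) x = sh 1 (sh n x) := by
      funext i; simp only [sh]; congr 1; ring
    rw [this]; exact h1 _ ih
  | pred n ih =>
    have : sh (-(n : ℤ) - 1) x = sh (-1) (sh (-n) x) := by
      funext i; simp only [sh]; congr 1; ring
    rw [this]; exact h2 _ ih

theorem nbhd {A : Type*} [TopologicalSpace A] {U : Set (ℤ → A)} (hU : IsOpen U)
    {y : ℤ → A} (hy : y ∈ U) :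
    ∃ N : ℕ, ∀ z : ℤ → A, blk z (-N) (2 * N + 1) = blk y (-N) (2 * N + 1) → z ∈ U := by
  obtain ⟨I, u, hu, hs⟩ := isOpen_pi_iff.1 hU y hy
  refine ⟨I.sup Int.natAbs, fun z hz => hs ?_⟩
  intro i hi
  have hle : i.natAbs ≤ I.sup Int.natAbs := Finset.le_sup (f := Int.natAbs) hi
  rw [blk_eq_iff] at hz
  generalize I.sup Int.natAbs = N at *
  have := hz (i + N).toNat (by omega)
  have e : (-(N : ℤ) + ((i + N).toNat : ℤ)) = i := by omega
  rw [e] at this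
  rw [this]
  exact (hu i hi).2

theorem open_blk {A : Type*} [TopologicalSpace A] [DiscreteTopology A]
    (p : ℤ) (n : ℕ) (v : List A) : IsOpen {x : ℤ → A | blk x p n = v} := by
  rw [isOpen_iff_mem_nhds]
  rintro x rfl
  have : {z : ℤ → A | blk z p n = blk x p n} =
      ⋂ j ∈ Finset.range n, (fun z : ℤ → A => z (p + (j : ℕ))) ⁻¹' {x (p + (j : ℕ))} := by
    ext z
    simp [blk_eq_iff]
  rw [this]
  refine IsOpen.mem_nhds ?_ ?_
  · refine isOpen_biInter_finset fun j _ => ?_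
    exact (isOpen_discrete _).preimage (continuous_apply _)
  · simp

theorem lang {A : Type*} {S : Set (ℤ → A)} (hS : S.Nonempty) :
    SubshiftLanguage (blocksOfSet S) := by
  refine ⟨?_, ?_, ?_⟩
  · obtain ⟨x, hx⟩ := hS
    exact ⟨_, mem_blocks.2 ⟨x, hx, 0, 0, rfl⟩⟩
  · rintro u w hw ⟨s, t, rfl⟩
    obtain ⟨x, hx, n, i, h⟩ := mem_blocks.1 hw
    exact mem_blocks.2 ⟨x, hx, _, _, (blk_split (blk_split h).1.symm.symm).2⟩
  · intro u hu
    obtain ⟨x, hx, n, i, rfl⟩ := mem_blocks.1 hu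
    refine ⟨x (i - 1), x (i + n), mem_blocks.2 ⟨x, hx, 1 + n, i - 1, ?_⟩,
      mem_blocks.2 ⟨x, hx, n + 1, i, ?_⟩⟩
    · rw [blk_add]; simp [blk]
    · rw [blk_add]; simp [blk]

theorem forward {A : Type*} [TopologicalSpace A] [DiscreteTopology A]
    {S : Set (ℤ → A)} (hS : IsSubshift S) {x : ℤ → A} (hx : x ∈ S)
    (hd : S ⊆ closure {y : ℤ → A | ∃ n : ℕ, y = (shiftMap A)^[n] x}) :
    Recurrent (blocksOfSet S) := by
  refine ⟨lang hS.1, ?_⟩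
  have key : ∀ v ∈ blocksOfSet S, ∀ k : ℤ, ∃ p, k ≤ p ∧ v = blk x p v.length := by
    intro v hv k
    obtain ⟨y, hy, n, i, rfl⟩ := mem_blocks.1 hv
    have hc := hd (sh_mem hS.2.2 (i - k) hy)
    obtain ⟨z, hz, m, rfl⟩ := mem_closure_iff.1 hc _ (open_blk k n (blk y i n))
      (by simp [blk_sh])
    refine ⟨k + m, by omega, ?_⟩
    rw [Set.mem_setOf_eq, iter, blk_sh] at hz
    rw [blk_length, hz]
  intro u hu v hv
  obtain ⟨p, -, hp⟩ := key u hu 0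
  obtain ⟨q, hq, hq'⟩ := key v hv (p + u.length)
  refine ⟨blk x (p + u.length) (q - (p + u.length)).toNat,
    mem_blocks.2 ⟨x, hx, u.length + (q - (p + u.length)).toNat + v.length, p, ?_⟩⟩
  rw [blk_add, blk_add, ← hp]
  have e : p + ((u.length + (q - (p + u.length)).toNat : ℕ) : ℤ) = q := by
    push_cast; omega
  rw [e, ← hq']

theorem backward {A : Type*} [Fintype A] [TopologicalSpace A] [DiscreteTopology A]
    {S : Set (ℤ → A)} (hS : IsSubshift S) (hR : Recurrent (blocksOfSet S)) :
    ∃ x ∈ S, S ⊆ closure {y : ℤ → A | ∃ n : ℕ, y = (shiftMap A)^[n] x} := by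
  have : CompactSpace S := isCompact_iff_compactSpace.1 hS.2.1.isCompact
  have : Nonempty S := hS.1.to_subtype
  let W : (blocksOfSet S) × ℤ → Set S := fun q =>
    {x | ∃ p, q.2 ≤ p ∧ blk x.1 p q.1.1.length = q.1.1}
  have hdense : Dense (⋂ q, W q) := by
    apply dense_iInter_of_isOpen
    · rintro ⟨⟨v, hv⟩, k⟩
      have : W (⟨v, hv⟩, k) = Subtype.val ⁻¹'
          (⋃ p : ℤ, ⋃ _ : k ≤ p, {x : ℤ → A | blk x p v.length = v}) := by
        ext x; simp [W]
      rw [this]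
      exact (isOpen_iUnion fun p => isOpen_iUnion fun _ => open_blk _ _ _).preimage
        continuous_subtype_val
    · rintro ⟨⟨v, hv⟩, k⟩
      rw [dense_iff_inter_open]
      rintro _ ⟨U, hU, rfl⟩ ⟨⟨y, hy⟩, hyU⟩
      obtain ⟨N, hN⟩ := nbhd hU hyU
      obtain ⟨w, hw⟩ := hR.2 (blk y (-N) ((2 * N + 1) + k.toNat))
        (mem_blocks.2 ⟨y, hy, _, _, rfl⟩) v hv
      obtain ⟨z, hz, n, i, h⟩ := mem_blocks.1 hw
      obtain ⟨h1, h2⟩ := blk_split h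
      obtain ⟨h3, h4⟩ := blk_split h1
      rw [blk_length, blk_add, blk_add z] at h3
      have h5 := (List.append_inj h3 (by simp [blk_length])).1
      refine ⟨⟨sh (i + N) z, sh_mem hS.2.2 _ hz⟩, hN _ ?_, ?_⟩
      · rw [blk_sh, h5]; congr 1; ring
      · simp only [List.length_append, blk_length] at h2
        refine ⟨-N + ((2 * N + 1 + k.toNat + w.length : ℕ) : ℤ), ?_, ?_⟩
        · push_cast; omega
        · simp only
          rw [blk_sh]
          conv_rhs => rw [h2]
          congr 1; ring
  obtain ⟨⟨x, hx⟩, hxW⟩ := hdense.nonempty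
  refine ⟨x, hx, fun y hy => mem_closure_iff.2 fun U hU hyU => ?_⟩
  obtain ⟨N, hN⟩ := nbhd hU hyU
  obtain ⟨p, hp, hp'⟩ := Set.mem_iInter.1 hxW
    (⟨blk y (-N) (2 * N + 1), mem_blocks.2 ⟨y, hy, _, _, rfl⟩⟩, -N)
  simp only [blk_length] at hp hp'
  refine ⟨_, hN _ ?_, (p + N).toNat, rfl⟩
  rw [iter, blk_sh, ← hp']
  congr 1
  omega

end IrrAux

/-- A subshift `S` is irreducible (has a dense forward orbit)
iff its language of blocks is recurrent. -/
theorem irreducible_iff_blocks_recurrent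
    {A : Type*} [Fintype A] [TopologicalSpace A] [DiscreteTopology A]
    (S : Set (ℤ → A)) (hS : IsSubshift S) :
    (∃ x ∈ S, S ⊆ closure {y : ℤ → A | ∃ n : ℕ, y = (shiftMap A)^[n] x}) ↔
      Recurrent (blocksOfSet S) := by
  exact ⟨fun ⟨_, hx, hd⟩ => IrrAux.forward hS hx hd, IrrAux.backward hS⟩
end

section
/- Let A be a finite alphabet with at least two letters and let φ be a primitive substitution over A. Then the language F_φ of factors of the words φᵏ(a) (k ∈ ℕ, a ∈ A) is uniformly recurrent. -/
theorem aux_left {A : Type*} {u x y : List A} (h : u <:+: y) (hx : x ≠ []) :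
    ∃ a, (a :: u) <:+: x ++ y := by
  obtain ⟨p, q, rfl⟩ := h
  have hne : x ++ p ≠ [] := by simp [hx]
  refine ⟨(x ++ p).getLast hne, (x ++ p).dropLast, q, ?_⟩
  have := List.dropLast_append_getLast hne
  calc _ = ((x ++ p).dropLast ++ [(x ++ p).getLast hne]) ++ u ++ q := by simp
    _ = _ := by rw [this]; simp

theorem aux_right_s18 {A : Type*} {u x y : List A} (h : u <:+: x) (hy : y ≠ []) :
    ∃ b, (u ++ [b]) <:+: x ++ y := by
  obtain ⟨p, q, rfl⟩ := h
  obtain ⟨b, r, hr⟩ := List.exists_cons_of_ne_nil (show q ++ y ≠ [] by simp [hy])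
  refine ⟨b, p, r, ?_⟩
  calc _ = p ++ u ++ (b :: r) := by simp
    _ = _ := by rw [← hr]; simp

theorem aux_prefix {A : Type*} (f : List A → List A)
    (hf : ∀ u v, f (u ++ v) = f u ++ f v) (hn : f [] = []) (M : ℕ)
    (hM : ∀ b, (f [b]).length ≤ M) (v t : List A) (h : t <+: f v) (ht : M < t.length) :
    ∃ b, f [b] <:+: t := by
  cases v with
  | nil => rw [hn] at h; simp at h; subst h; simp at ht
  | cons b v =>
    refine ⟨b, List.IsPrefix.isInfix (List.prefix_of_prefix_length_le ?_ h ((hM b).trans ht.le))⟩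
    rw [show b :: v = [b] ++ v from rfl, hf]
    exact List.prefix_append _ _

theorem aux_infix {A : Type*} (f : List A → List A)
    (hf : ∀ u v, f (u ++ v) = f u ++ f v) (hn : f [] = []) (M : ℕ)
    (hM : ∀ b, (f [b]).length ≤ M) (v w : List A) (h : w <:+: f v)
    (hw : 2 * M + 1 ≤ w.length) :
    ∃ b, f [b] <:+: w := by
  induction v with
  | nil => rw [hn] at h; simp at h; subst h; simp at hw
  | cons b v ih =>
    rw [show b :: v = [b] ++ v from rfl, hf] at h
    have hb := hM b
    rcases List.infix_append_iff.1 h with h | h | ⟨s, t, rfl, hs, ht⟩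
    · have := h.length_le; omega
    · exact ih h
    · have := hs.length_le
      simp only [List.length_append] at hw
      obtain ⟨c, hc⟩ := aux_prefix f hf hn M hM v t ht (by omega)
      exact ⟨c, hc.trans (List.suffix_append _ _).isInfix⟩

/-- The language of factors of `φᵏ(a)` for a primitive substitution
`φ` over an alphabet with at least two letters is uniformly recurrent. -/
theorem primitive_substitution_language_uniformly_recurrent
    {A : Type*} [Fintype A] (hA : 1 < Fintype.card A)
    (φ : List A → List A)
    (hhom : ∀ u v : List A, φ (u ++ v) = φ u ++ φ v) (hnil : φ [] = [])
    (hprim : ∃ n : ℕ, 1 ≤ n ∧ ∀ a b : A, [b] <:+: φ^[n] [a]) :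
    UniformlyRecurrent {w : List A | ∃ (k : ℕ) (a : A), w <:+: φ^[k] [a]} := by
  obtain ⟨n, hn1, hn⟩ := hprim
  have ithom : ∀ k u v, φ^[k] (u ++ v) = φ^[k] u ++ φ^[k] v := by
    intro k
    induction k with
    | zero => intro u v; rfl
    | succ k ih => intro u v; simp only [Function.iterate_succ_apply, hhom, ih]
  have itnil : ∀ k, φ^[k] [] = [] := fun k => Function.iterate_fixed hnil k
  have itmono : ∀ k u v, u <:+: v → φ^[k] u <:+: φ^[k] v := by
    rintro k u v ⟨p, q, rfl⟩
    rw [ithom, ithom]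
    exact ⟨_, _, rfl⟩
  have hmul : ∀ m a, [a] <:+: φ^[n * m] [a] := by
    intro m a
    induction m with
    | zero => simp
    | succ m ih =>
      rw [Nat.mul_succ, Nat.add_comm, Function.iterate_add_apply]
      exact (hn a a).trans (itmono n _ _ ih)
  have itne : ∀ k a, φ^[k] [a] ≠ [] := by
    intro k a h
    have h1 := hmul k a
    have h2 : n * k = (n * k - k) + k := by
      have : k ≤ n * k := Nat.le_mul_of_pos_left k hn1
      omega
    rw [h2, Function.iterate_add_apply, h, itnil] at h1
    simp at h1
  have hin : ∀ u k a, u <:+: φ^[k] [a] → ∀ b, u <:+: φ^[k + n] [b] := by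
    intro u k a h b
    rw [Function.iterate_add_apply]
    exact h.trans (itmono k _ _ (hn b a))
  obtain ⟨c, d, hcd⟩ := Fintype.exists_pair_of_one_lt_card hA
  refine ⟨⟨⟨[], 0, c, by simp⟩, ?_, ?_⟩, ?_⟩
  · rintro u w ⟨k, a, h⟩ hu
    exact ⟨k, a, hu.trans h⟩
  · rintro u ⟨k, a, h⟩
    have hu := hin u k a h
    have h1 := hn c c
    have h2 := hn c d
    rcases hx : φ^[n] [c] with _ | ⟨x, _ | ⟨y, r⟩⟩
    · exact absurd hx (itne n c)
    · rw [hx] at h1 h2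
      have h1 := h1.subset (List.mem_singleton_self c)
      have h2 := h2.subset (List.mem_singleton_self d)
      simp at h1 h2
      exact absurd (h1.trans h2.symm) hcd
    · have key : φ^[k + n] [x] ++ φ^[k + n] [y] <:+: φ^[k + n + n] [c] := by
        rw [Function.iterate_add_apply φ (k + n) n, hx, ← ithom]
        exact itmono _ _ _ ⟨[], r, by simp⟩
      obtain ⟨a', ha⟩ := aux_left (hu y) (itne (k + n) x)
      obtain ⟨b', hb⟩ := aux_right_s18 (hu x) (itne (k + n) y)
      exact ⟨a', b', ⟨_, _, ha.trans key⟩, ⟨_, _, hb.trans key⟩⟩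
  · rintro u ⟨k, a, h⟩
    have hu := hin u k a h
    generalize k + n = K at hu
    refine ⟨2 * (Finset.univ.sup fun b => (φ^[K] [b]).length) + 1, ?_⟩
    rintro w ⟨j, e, hw⟩ hlen
    have hw2 : w <:+: φ^[K] (φ^[j + n * K - K] [e]) := by
      rw [← Function.iterate_add_apply]
      have : K ≤ n * K := Nat.le_mul_of_pos_left K hn1
      rw [show K + (j + n * K - K) = j + n * K by omega, Function.iterate_add_apply]
      exact hw.trans (itmono j _ _ (hmul K e))
    obtain ⟨b, hb⟩ := aux_infix (φ^[K]) (ithom K) (itnil K) _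
      (fun b => Finset.le_sup (f := fun b => (φ^[K] [b]).length) (Finset.mem_univ b)) _ w hw2 hlen
    exact (hu b).trans hb
end

section
/- Let A be a finite alphabet. Every rational bifix code X ⊆ A+ is contained in a rational complete bifix code Z ⊆ A+. -/
namespace BifixCompl

section

variable {A : Type*}

/-- some suffix is in `X` -/
def Ends (X : Set (List A)) (w : List A) : Prop := ∃ x ∈ X, x <:+ w
/-- some prefix is in `X` -/
def Starts (X : Set (List A)) (w : List A) : Prop := ∃ x ∈ X, x <+: w
/-- reversed set -/
def rv (X : Set (List A)) : Set (List A) := {w | w.reverse ∈ X}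

theorem mem_rv {X : Set (List A)} {w : List A} : w ∈ rv X ↔ w.reverse ∈ X := Iff.rfl

theorem rv_rv (X : Set (List A)) : rv (rv X) = X := by
  ext w; simp [mem_rv]

theorem ends_rv {X : Set (List A)} {w : List A} : Ends (rv X) w ↔ Starts X w.reverse := by
  constructor
  · rintro ⟨x, hx, h⟩
    exact ⟨x.reverse, hx, List.reverse_prefix.2 h⟩
  · rintro ⟨x, hx, h⟩
    refine ⟨x.reverse, by simpa [mem_rv] using hx, ?_⟩
    rw [← List.reverse_prefix]; simpa using h

theorem starts_rv {X : Set (List A)} {w : List A} : Starts (rv X) w ↔ Ends X w.reverse := by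
  have := @ends_rv A (rv X) w.reverse
  rw [rv_rv] at this; simpa using this.symm

theorem ends_cons {X : Set (List A)} {a : A} {w : List A} :
    Ends X (a :: w) ↔ a :: w ∈ X ∨ Ends X w := by
  simp only [Ends, List.suffix_cons_iff]
  constructor
  · rintro ⟨x, hx, rfl | h⟩
    · exact Or.inl hx
    · exact Or.inr ⟨x, hx, h⟩
  · rintro (h | ⟨x, hx, h⟩)
    · exact ⟨_, h, Or.inl rfl⟩
    · exact ⟨x, hx, Or.inr h⟩

theorem starts_snoc {X : Set (List A)} {a : A} {w : List A} :
    Starts X (w ++ [a]) ↔ w ++ [a] ∈ X ∨ Starts X w := by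
  simp only [Starts, List.prefix_concat_iff]
  constructor
  · rintro ⟨x, hx, rfl | h⟩
    · exact Or.inl hx
    · exact Or.inr ⟨x, hx, h⟩
  · rintro (h | ⟨x, hx, h⟩)
    · exact ⟨_, h, Or.inl rfl⟩
    · exact ⟨x, hx, Or.inr h⟩

theorem bifix_rv {X : Set (List A)} (h : BifixCode X) : BifixCode (rv X) := by
  obtain ⟨⟨⟨x, hx⟩, hne, hp⟩, -, -, hs⟩ := h
  have h1 : (rv X).Nonempty := ⟨x.reverse, by simpa [mem_rv] using hx⟩
  have h2 : ∀ x ∈ rv X, x ≠ [] := fun x hx h => hne _ hx (by simp [h])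
  refine ⟨⟨h1, h2, ?_⟩, h1, h2, ?_⟩
  · intro x hx y hy hxy
    exact List.reverse_injective (hs _ hx _ hy (List.reverse_suffix.2 hxy))
  · intro x hx y hy hxy
    exact List.reverse_injective (hp _ hx _ hy (List.reverse_prefix.2 hxy))

/-- `L` is the indicator (number of parses) of `X`. -/
structure Ind (X : Set (List A)) (L : List A → ℕ) : Prop where
  nil : L [] = 1
  snoc_in : ∀ w a, Ends X (w ++ [a]) → L (w ++ [a]) = L w
  snoc_out : ∀ w a, ¬ Ends X (w ++ [a]) → L (w ++ [a]) = L w + 1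
  cons_in : ∀ w a, Starts X (a :: w) → L (a :: w) = L w
  cons_out : ∀ w a, ¬ Starts X (a :: w) → L (a :: w) = L w + 1

theorem Ind.rv {X : Set (List A)} {L : List A → ℕ} (h : Ind X L) :
    Ind (rv X) (fun w => L w.reverse) := by
  refine ⟨by simpa using h.nil, ?_, ?_, ?_, ?_⟩
  · intro w a hw
    rw [ends_rv] at hw
    simp only [List.reverse_append, List.reverse_cons, List.reverse_nil, List.nil_append,
      List.singleton_append] at hw ⊢
    exact h.cons_in _ _ hw
  · intro w a hw
    rw [ends_rv] at hw
    simp only [List.reverse_append, List.reverse_cons, List.reverse_nil, List.nil_append,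
      List.singleton_append] at hw ⊢
    exact h.cons_out _ _ hw
  · intro w a hw
    rw [starts_rv] at hw
    simp only [List.reverse_cons] at hw ⊢
    exact h.snoc_in _ _ hw
  · intro w a hw
    rw [starts_rv] at hw
    simp only [List.reverse_cons] at hw ⊢
    exact h.snoc_out _ _ hw

open Classical in
/-- left-to-right count, on the reversed word -/
noncomputable def Lr (X : Set (List A)) : List A → ℕ
  | [] => 1
  | a :: r => Lr X r + if Ends X (a :: r).reverse then 0 else 1

open Classical in
/-- right-to-left count -/
noncomputable def Ll (X : Set (List A)) : List A → ℕ
  | [] => 1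
  | a :: r => Ll X r + if Starts X (a :: r) then 0 else 1

open Classical in
theorem Lr_snoc (X : Set (List A)) (w : List A) (a : A) :
    Lr X (w ++ [a]).reverse = Lr X w.reverse + if Ends X (w ++ [a]) then 0 else 1 := by
  simp [Lr]

open Classical in
theorem Ll_cons (X : Set (List A)) (w : List A) (a : A) :
    Ll X (a :: w) = Ll X w + if Starts X (a :: w) then 0 else 1 := by
  simp [Ll]

theorem Lr_eq_Ll {X : Set (List A)} (hX : BifixCode X) :
    ∀ n : ℕ, ∀ w : List A, w.length = n → Lr X w.reverse = Ll X w := by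
  intro n
  induction n using Nat.strong_induction_on with
  | _ n ih =>
    intro w hw
    rcases w with _ | ⟨a, w⟩
    · simp [Lr, Ll]
    rcases List.eq_nil_or_concat w with rfl | ⟨u, b, rfl⟩
    · have h1 : Ends X [a] ↔ Starts X [a] := by
        have e1 : Ends X [a] ↔ _ := ends_cons
        have e2 : Starts X ([] ++ [a]) ↔ _ := starts_snoc
        have e3 : ¬ Ends X ([] : List A) := by
          rintro ⟨x, hx, h⟩
          exact hX.1.2.1 x hx (List.suffix_nil.1 h)
        have e4 : ¬ Starts X ([] : List A) := by
          rintro ⟨x, hx, h⟩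
          exact hX.1.2.1 x hx (List.prefix_nil.1 h)
        simp only [List.nil_append] at e2
        rw [e1, e2]; tauto
      have e1 := Lr_snoc X [] a
      have e2 := Ll_cons X [] a
      simp only [List.nil_append] at e1
      rw [e1, e2]
      simp only [List.reverse_nil, Lr, Ll]
      by_cases hs : Starts X [a]
      · rw [if_pos hs, if_pos (h1.2 hs)]
      · rw [if_neg hs, if_neg (fun h => hs (h1.1 h))]
    · simp only [List.concat_eq_append] at hw ⊢
      have hlen : u.length + 2 = n := by simpa using hw
      have i1 := ih (u.length + 1) (by omega) (a :: u) (by simp)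
      have i2 := ih (u.length + 1) (by omega) (u ++ [b]) (by simp)
      have i3 := ih u.length (by omega) u rfl
      have e1 := Lr_snoc X (a :: u) b
      have e2 := Lr_snoc X u b
      have e3 := Ll_cons X u a
      have e4 := Ll_cons X (u ++ [b]) a
      simp only [List.cons_append] at e1
      have c1 : Ends X (a :: (u ++ [b])) ↔ _ := ends_cons
      have c2 : Starts X ((a :: u) ++ [b]) ↔ _ := starts_snoc
      simp only [List.cons_append] at c2
      have d1 : a :: (u ++ [b]) ∈ X → ¬ Ends X (u ++ [b]) := by
        rintro h ⟨x, hx, hxs⟩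
        have := hX.2.2.2 x hx _ h (hxs.trans (List.suffix_cons _ _))
        have hl := hxs.length_le
        subst this
        simp at hl
      have d2 : a :: (u ++ [b]) ∈ X → ¬ Starts X (a :: u) := by
        rintro h ⟨x, hx, hxs⟩
        have := hX.1.2.2 x hx _ h (hxs.trans ⟨[b], by simp⟩)
        have hl := hxs.length_le
        subst this
        simp at hl
      rw [e1, e4]
      split_ifs at * <;> first | omega | tauto

theorem exists_ind {X : Set (List A)} (hX : BifixCode X) : ∃ L, Ind X L := by
  refine ⟨Ll X, by simp [Ll], ?_, ?_, ?_, ?_⟩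
  · intro w a h
    have := Lr_snoc X w a
    rw [Lr_eq_Ll hX _ _ rfl, Lr_eq_Ll hX _ _ rfl] at this
    simpa [h] using this
  · intro w a h
    have := Lr_snoc X w a
    rw [Lr_eq_Ll hX _ _ rfl, Lr_eq_Ll hX _ _ rfl] at this
    simpa [h] using this
  · intro w a h
    simp [Ll, h]
  · intro w a h
    simp [Ll, h]

theorem Ind.le_cons {X : Set (List A)} {L : List A → ℕ} (h : Ind X L) (a : A) (w : List A) :
    L w ≤ L (a :: w) := by
  by_cases hc : Starts X (a :: w)
  · rw [h.cons_in _ _ hc]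
  · rw [h.cons_out _ _ hc]; omega

theorem Ind.le_append_left {X : Set (List A)} {L : List A → ℕ} (h : Ind X L) (s w : List A) :
    L w ≤ L (s ++ w) := by
  induction s with
  | nil => simp
  | cons a s ih => exact ih.trans (h.le_cons _ _)

theorem Ind.le_append_right {X : Set (List A)} {L : List A → ℕ} (h : Ind X L) (w t : List A) :
    L w ≤ L (w ++ t) := by
  simpa using h.rv.le_append_left t.reverse w.reverse

theorem Ind.le_infix {X : Set (List A)} {L : List A → ℕ} (h : Ind X L) {u w : List A}
    (huw : u <:+: w) : L u ≤ L w := by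
  obtain ⟨s, t, rfl⟩ := huw
  exact (h.le_append_left s u).trans (h.le_append_right _ t)

/-- bounded indicator implies completeness -/
theorem right_complete {X : Set (List A)} {L : List A → ℕ} (h : Ind X L) (hX : BifixCode X)
    (N : ℕ) (hN : ∀ w, L w ≤ N) : RightFComplete X Set.univ := by
  obtain ⟨w, hw⟩ : ∃ w, ∀ v, L v ≤ L w := by
    have hf : (Set.range L).Finite := (Set.finite_Iic N).subset (by rintro _ ⟨w, rfl⟩; exact hN w)
    obtain ⟨m, ⟨w, rfl⟩, hm⟩ := hf.exists_maximal ⟨_, Set.mem_range_self []⟩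
    refine ⟨w, fun v => ?_⟩
    by_contra hlt
    exact hlt (hm ⟨v, rfl⟩ (by omega))
  suffices H : ∀ n, ∀ u : List A, u.length = n → ∃ w ∈ KStarSet X, u <+: w from
    fun u _ => H _ u rfl
  intro n
  induction n using Nat.strong_induction_on with
  | _ n ih =>
    intro u hu
    rcases u with _ | ⟨a, u⟩
    · exact ⟨[], ⟨[], by simp⟩, by simp⟩
    have hs : Starts X (a :: (u ++ w)) := by
      by_contra hc
      have h1 := h.cons_out _ _ hc
      have h2 := hw (a :: (u ++ w))
      have h3 := h.le_append_left u w
      omega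
    obtain ⟨x, hx, hxp⟩ := hs
    have hne := hX.1.2.1 x hx
    have hux : (a :: u) <+: a :: (u ++ w) := ⟨w, by simp⟩
    rcases List.prefix_or_prefix_of_prefix hxp hux with hh | hh
    · obtain ⟨t, ht⟩ := hh
      have hxl : 0 < x.length := List.length_pos_iff.2 hne
      have htl : x.length + t.length = n := by rw [← hu, ← ht]; simp
      obtain ⟨v, ⟨l, hl, rfl⟩, hv⟩ := ih t.length (by omega) t rfl
      refine ⟨x ++ l.flatten, ⟨x :: l, ?_, by simp⟩, ?_⟩
      · simpa using ⟨hx, hl⟩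
      · rw [← ht]; exact (List.prefix_append_right_inj x).2 hv
    · exact ⟨x, ⟨[x], by simpa using hx, by simp⟩, hh⟩

theorem kstar_rv {X : Set (List A)} {w : List A} (h : w ∈ KStarSet (rv X)) :
    w.reverse ∈ KStarSet X := by
  obtain ⟨l, hl, rfl⟩ := h
  refine ⟨(l.map List.reverse).reverse, ?_, by rw [List.reverse_flatten]⟩
  intro x hx
  simp only [List.mem_reverse, List.mem_map] at hx
  obtain ⟨y, hy, rfl⟩ := hx
  exact hl y hy

theorem complete {X : Set (List A)} {L : List A → ℕ} (h : Ind X L) (hX : BifixCode X)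
    (N : ℕ) (hN : ∀ w, L w ≤ N) : FComplete X Set.univ := by
  refine ⟨right_complete h hX N hN, ?_⟩
  intro u _
  obtain ⟨w, hw, huw⟩ := right_complete h.rv (bifix_rv hX) N (fun w => hN _) u.reverse trivial
  exact ⟨w.reverse, kstar_rv hw, by rw [← List.reverse_prefix]; simpa using huw⟩

/-- new words -/
def Wd (L : List A → ℕ) (D : ℕ) : Set (List A) :=
  {w | ∃ a v b, w = a :: (v ++ [b]) ∧ L v + 1 = D ∧ L (a :: v) = D ∧ L (v ++ [b]) = D ∧
    L (a :: (v ++ [b])) = D + 1}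

/-- truncated code -/
def Zd (X : Set (List A)) (L : List A → ℕ) (D : ℕ) : Set (List A) :=
  {x | x ∈ X ∧ L x ≤ D} ∪ Wd L D

theorem Wd_rv_sub (L : List A → ℕ) (D : ℕ) {w : List A} (h : w ∈ Wd L D) :
    w.reverse ∈ Wd (fun w => L w.reverse) D := by
  obtain ⟨a, v, b, rfl, h1, h2, h3, h4⟩ := h
  exact ⟨b, v.reverse, a, by simp, by simpa using h1, by simpa using h3, by simpa using h2,
    by simpa using h4⟩

theorem Wd_rv (L : List A → ℕ) (D : ℕ) : Wd (fun w => L w.reverse) D = rv (Wd L D) := by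
  ext w
  rw [mem_rv]
  constructor
  · intro h
    simpa using Wd_rv_sub _ _ h
  · intro h
    simpa using Wd_rv_sub _ _ h

theorem Zd_rv (X : Set (List A)) (L : List A → ℕ) (D : ℕ) :
    Zd (rv X) (fun w => L w.reverse) D = rv (Zd X L D) := by
  unfold Zd
  rw [Wd_rv]
  rfl

theorem ends_Zd {X : Set (List A)} {L : List A → ℕ} (h : Ind X L)
    {D : ℕ} (hD : 2 ≤ D) (w : List A) (a : A) :
    Ends (Zd X L D) (w ++ [a]) ↔ D ≤ L w ∨ Ends X (w ++ [a]) := by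
  constructor
  · rintro ⟨z, hz | ⟨c, v, b, rfl, h1, h2, h3, h4⟩, hs⟩
    · exact Or.inr ⟨z, hz.1, hs⟩
    · left
      obtain ⟨s, hs⟩ := hs
      have : s ++ (c :: v) = w := by
        have := congrArg List.dropLast hs
        rw [← List.cons_append, ← List.append_assoc] at this
        simpa only [List.dropLast_concat] using this
      rw [← h2, ← this]
      exact h.le_append_left _ _
  · induction w with
    | nil =>
      rintro (h1 | ⟨x, hx, hs⟩)
      · rw [h.nil] at h1; omega
      · rcases (List.suffix_cons_iff.1 hs) with rfl | hs'
        · refine ⟨[] ++ [a], Or.inl ⟨hx, ?_⟩, List.suffix_rfl⟩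
          have := h.snoc_in [] a ⟨_, hx, List.suffix_rfl⟩
          rw [h.nil] at this; omega
        · exact ⟨x, Or.inl ⟨hx, by rw [List.suffix_nil.1 hs', h.nil]; omega⟩, hs⟩
    | cons c w ih =>
      intro hc
      rw [List.cons_append, ends_cons]
      by_cases h1 : D ≤ L w ∨ Ends X (w ++ [a])
      · exact Or.inr (ih h1)
      left
      push Not at h1
      obtain ⟨h1, h2⟩ := h1
      have h3 := h.snoc_out _ _ h2
      rw [List.cons_append, ends_cons] at hc
      by_cases h4 : c :: (w ++ [a]) ∈ X
      · left
        refine ⟨h4, ?_⟩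
        rw [h.cons_in _ _ ⟨_, h4, List.prefix_rfl⟩]; omega
      · right
        have h5 : D ≤ L (c :: w) := by tauto
        have h6 : L (c :: w) ≤ L w + 1 := by
          by_cases hs : Starts X (c :: w)
          · rw [h.cons_in _ _ hs]; omega
          · rw [h.cons_out _ _ hs]
        have h7 : ¬ Ends X ((c :: w) ++ [a]) := by
          rw [List.cons_append, ends_cons]; tauto
        have h8 := h.snoc_out _ _ h7
        rw [List.cons_append] at h8
        exact ⟨c, w, a, rfl, by omega, by omega, by omega, by omega⟩

theorem starts_Zd {X : Set (List A)} {L : List A → ℕ} (h : Ind X L)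
    {D : ℕ} (hD : 2 ≤ D) (w : List A) (a : A) :
    Starts (Zd X L D) (a :: w) ↔ D ≤ L w ∨ Starts X (a :: w) := by
  have := ends_Zd h.rv hD w.reverse a
  rw [Zd_rv, ends_rv, ends_rv] at this
  simpa using this

theorem ind_Zd {X : Set (List A)} {L : List A → ℕ} (h : Ind X L)
    {D : ℕ} (hD : 2 ≤ D) : Ind (Zd X L D) (fun w => min D (L w)) := by
  refine ⟨by simp only [h.nil]; omega, ?_, ?_, ?_, ?_⟩
  · intro w a hw
    rw [ends_Zd h hD] at hw
    rcases hw with hw | hw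
    · have := h.le_append_right w [a]
      omega
    · simp only [h.snoc_in _ _ hw]
  · intro w a hw
    rw [ends_Zd h hD] at hw
    push Not at hw
    have := h.snoc_out _ _ hw.2
    omega
  · intro w a hw
    rw [starts_Zd h hD] at hw
    rcases hw with hw | hw
    · have := h.le_append_left [a] w
      simp only [List.singleton_append] at this
      omega
    · simp only [h.cons_in _ _ hw]
  · intro w a hw
    rw [starts_Zd h hD] at hw
    push Not at hw
    have := h.cons_out _ _ hw.2
    omega

theorem Zd_suffix {X : Set (List A)} {L : List A → ℕ} (h : Ind X L) (hX : BifixCode X)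
    {D : ℕ} (hD : 2 ≤ D) : ∀ x ∈ Zd X L D, ∀ y ∈ Zd X L D, x <:+ y → x = y := by
  intro x hx y hy hxy
  rcases y with _ | ⟨c, y⟩
  · exact List.suffix_nil.1 hxy
  rcases List.suffix_cons_iff.1 hxy with hxy | hxy
  · exact hxy
  exfalso
  have hxne : x ≠ [] := by
    rcases hx with hx | ⟨a, v, b, rfl, -⟩
    · exact hX.1.2.1 x hx.1
    · simp
  rcases List.eq_nil_or_concat y with rfl | ⟨u, b, rfl⟩
  · exact hxne (List.suffix_nil.1 hxy)
  rw [List.concat_eq_append] at *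
  have he := (ends_Zd h hD u b).1 ⟨x, hx, hxy⟩
  rcases hy with ⟨hy, hyD⟩ | ⟨a, v, b', heq, h1, h2, h3, h4⟩
  · have h1 : ¬ Ends X (u ++ [b]) := by
      rintro ⟨z, hz, hzs⟩
      have := hX.2.2.2 z hz _ hy (hzs.trans (List.suffix_cons _ _))
      have hl := hzs.length_le
      subst this
      simp at hl
    have h2 := h.snoc_out _ _ h1
    have h3 := h.cons_in _ _ ⟨_, hy, List.prefix_rfl⟩
    have : D ≤ L u := by tauto
    omega
  · have e := List.cons.inj heq
    have e2 := List.append_inj' e.2 rfl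
    obtain ⟨e2, e3⟩ := e2
    have e4 : b = b' := by simpa using e3
    have e1 := e.1
    subst e1 e2 e4
    have h5 : Ends X (u ++ [b]) := by
      rcases he with he | he
      · omega
      · exact he
    have h6 := h.snoc_in _ _ h5
    omega

theorem Zd_prefix {X : Set (List A)} {L : List A → ℕ} (h : Ind X L) (hX : BifixCode X)
    {D : ℕ} (hD : 2 ≤ D) : ∀ x ∈ Zd X L D, ∀ y ∈ Zd X L D, x <+: y → x = y := by
  intro x hx y hy hxy
  have := Zd_suffix h.rv (bifix_rv hX) hD
  rw [Zd_rv] at this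
  exact List.reverse_injective (this x.reverse (by simpa [mem_rv] using hx) y.reverse
    (by simpa [mem_rv] using hy) (List.reverse_suffix.2 hxy))

theorem Zd_ne {X : Set (List A)} {L : List A → ℕ} (hX : BifixCode X)
    {D : ℕ} : ∀ x ∈ Zd X L D, x ≠ [] := by
  rintro x (hx | ⟨a, v, b, rfl, -⟩)
  · exact hX.1.2.1 x hx.1
  · simp

theorem Zd_bifix {X : Set (List A)} {L : List A → ℕ} (h : Ind X L) (hX : BifixCode X)
    {D : ℕ} (hD : 2 ≤ D) (hne : (Zd X L D).Nonempty) : BifixCode (Zd X L D) :=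
  ⟨⟨hne, Zd_ne hX, Zd_prefix h hX hD⟩, hne, Zd_ne hX, Zd_suffix h hX hD⟩

/-- left quotient -/
def quo (X : Set (List A)) (w : List A) : Set (List A) := {v | w ++ v ∈ X}

/-- regular, via finitely many quotients -/
def Reg (X : Set (List A)) : Prop := (Set.range (quo X)).Finite

theorem reg_iff {X : Set (List A)} : Reg X ↔ Language.IsRegular (X : Language A) :=
  Language.isRegular_iff_finite_range_leftQuotient.symm

theorem reg_iff_rational {X : Set (List A)} : Reg X ↔ IsRational X := by
  rw [reg_iff]
  constructor
  · rintro ⟨σ, hσ, M, hM⟩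
    exact ⟨σ, hσ, M, fun w => by rw [hM]; rfl⟩
  · rintro ⟨σ, hσ, M, hM⟩
    exact ⟨σ, hσ, M, Set.ext hM⟩

theorem reg_of {τ : Type*} {X : Set (List A)} (f : List A → τ) (hf : (Set.range f).Finite)
    (h : ∀ w w', f w = f w' → quo X w = quo X w') : Reg X := by
  refine (hf.image (fun t => quo X (Function.invFun f t))).subset ?_
  rintro _ ⟨w, rfl⟩
  exact ⟨f w, ⟨w, rfl⟩, h _ _ (Function.invFun_eq ⟨w, rfl⟩)⟩

theorem Reg.rv {X : Set (List A)} (h : Reg X) : Reg (rv X) :=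
  reg_iff.2 (Language.IsRegular.reverse (reg_iff.1 h))

theorem Reg.compl {X : Set (List A)} (h : Reg X) : Reg Xᶜ := by
  refine reg_of (quo X) h ?_
  intro w w' hw
  ext v
  have : v ∈ quo X w ↔ v ∈ quo X w' := by rw [hw]
  exact not_congr this

theorem Reg.union {X Y : Set (List A)} (h : Reg X) (h' : Reg Y) : Reg (X ∪ Y) := by
  refine reg_of (fun w => (quo X w, quo Y w)) ((h.prod h').subset ?_) ?_
  · rintro _ ⟨w, rfl⟩
    exact ⟨⟨w, rfl⟩, ⟨w, rfl⟩⟩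
  · intro w w' hw
    obtain ⟨h1, h2⟩ := Prod.mk.inj hw
    ext v
    have e1 : v ∈ quo X w ↔ v ∈ quo X w' := by rw [h1]
    have e2 : v ∈ quo Y w ↔ v ∈ quo Y w' := by rw [h2]
    exact or_congr e1 e2

theorem Reg.inter {X Y : Set (List A)} (h : Reg X) (h' : Reg Y) : Reg (X ∩ Y) := by
  have := (h.compl.union h'.compl).compl
  rwa [Set.compl_union, compl_compl, compl_compl] at this

/-- concatenation -/
def cat (X Y : Set (List A)) : Set (List A) := {w | ∃ p ∈ X, ∃ q ∈ Y, w = p ++ q}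

theorem quo_cat (X Y : Set (List A)) (w : List A) :
    quo (cat X Y) w = cat (quo X w) Y ∪ ⋃₀ {T | ∃ p ∈ X, ∃ s, w = p ++ s ∧ T = quo Y s} := by
  ext v
  constructor
  · rintro ⟨p, hp, q, hq, h⟩
    rcases List.append_eq_append_iff.1 h with ⟨c, rfl, rfl⟩ | ⟨c, rfl, rfl⟩
    · exact Or.inl ⟨c, hp, q, hq, rfl⟩
    · exact Or.inr ⟨_, ⟨p, hp, c, rfl, rfl⟩, hq⟩
  · rintro (⟨c, hc, q, hq, rfl⟩ | ⟨_, ⟨p, hp, s, rfl, rfl⟩, hv⟩)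
    · exact ⟨w ++ c, hc, q, hq, by simp⟩
    · exact ⟨p, hp, s ++ v, hv, by simp⟩

theorem Reg.cat {X Y : Set (List A)} (h : Reg X) (h' : Reg Y) : Reg (cat X Y) := by
  refine reg_of (fun w => (quo X w, {T | ∃ p ∈ X, ∃ s, w = p ++ s ∧ T = quo Y s}))
    ((h.prod h'.finite_subsets).subset ?_) ?_
  · rintro _ ⟨w, rfl⟩
    refine ⟨⟨w, rfl⟩, ?_⟩
    rintro _ ⟨p, hp, s, hs, rfl⟩
    exact ⟨s, rfl⟩
  · intro w w' hw
    obtain ⟨h1, h2⟩ := Prod.mk.inj hw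
    rw [quo_cat, quo_cat, h1, h2]

/-- prefixes -/
def Pref (X : Set (List A)) : Set (List A) := {w | ∃ t, w ++ t ∈ X}

theorem Reg.pref {X : Set (List A)} (h : Reg X) : Reg (Pref X) := by
  refine reg_of (quo X) h ?_
  intro w w' hw
  ext v
  have : ∀ t, v ++ t ∈ quo X w ↔ v ++ t ∈ quo X w' := by rw [hw]; simp
  simp only [quo, Pref, Set.mem_ofPred_eq, List.append_assoc] at this ⊢
  simp only [this]

theorem reg_univ : Reg (Set.univ : Set (List A)) := by
  refine reg_of (fun _ => ()) (Set.toFinite _) ?_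
  intro w w' _
  rfl

theorem reg_ne : Reg ({w | w ≠ []} : Set (List A)) := by
  refine reg_of (fun w => (w = [])) (Set.toFinite _) ?_
  intro w w' h
  ext v
  have : (w = []) ↔ (w' = []) := by simpa using h
  simp [quo, this]

theorem reg_ends {X : Set (List A)} (h : Reg X) : Reg {w | Ends X w} := by
  have : {w | Ends X w} = cat Set.univ X := by
    ext w
    constructor
    · rintro ⟨x, hx, s, rfl⟩
      exact ⟨s, trivial, x, hx, rfl⟩
    · rintro ⟨s, -, x, hx, rfl⟩
      exact ⟨x, hx, s, rfl⟩
  rw [this]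
  exact reg_univ.cat h

theorem Ind.one_le {X : Set (List A)} {L : List A → ℕ} (h : Ind X L) (w : List A) : 1 ≤ L w := by
  have := h.le_append_right [] w
  rwa [h.nil] at this

theorem reg_Im {X : Set (List A)} {L : List A → ℕ} (h : Ind X L) (hr : Reg X) (m : ℕ) :
    Reg {w | m + 1 ≤ L w} := by
  induction m with
  | zero =>
    have : {w | 0 + 1 ≤ L w} = Set.univ := by
      ext w; simpa using h.one_le w
    rw [this]; exact reg_univ
  | succ m ih =>
    have : {w | m + 1 + 1 ≤ L w} =
        cat (cat {w | m + 1 ≤ L w} {w | w ≠ []} ∩ {w | Ends X w}ᶜ) Set.univ := by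
      ext w
      constructor
      · intro hw
        induction w using List.reverseRecOn with
        | nil =>
          have := h.nil
          have hw' : m + 1 + 1 ≤ L [] := hw
          omega
        | append_singleton w a ihw =>
          have hw' : m + 1 + 1 ≤ L (w ++ [a]) := hw
          by_cases h1 : m + 1 + 1 ≤ L w
          · obtain ⟨p, hp, q, -, hq⟩ := ihw h1
            exact ⟨p, hp, q ++ [a], trivial, by rw [hq]; simp⟩
          · have h2 : ¬ Ends X (w ++ [a]) := by
              intro h2
              have := h.snoc_in _ _ h2
              omega
            have h3 := h.snoc_out _ _ h2
            refine ⟨w ++ [a], ⟨⟨w, ?_, [a], by simp, rfl⟩, h2⟩, [], trivial, by simp⟩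
            show m + 1 ≤ L w
            omega
      · rintro ⟨_, ⟨⟨p, hp, q, hq, rfl⟩, h2⟩, t, -, rfl⟩
        have hp' : m + 1 ≤ L p := hp
        rcases List.eq_nil_or_concat q with rfl | ⟨q, b, rfl⟩
        · exact absurd rfl hq
        rw [List.concat_eq_append, ← List.append_assoc] at *
        have h3 := h.snoc_out _ _ h2
        have h4 := h.le_append_right p q
        have h5 := h.le_append_right (p ++ q ++ [b]) t
        show m + 1 + 1 ≤ L _
        omega
    rw [this]
    exact ((ih.cat reg_ne).inter (reg_ends hr).compl).cat reg_univ

theorem Wd_eq {X : Set (List A)} {L : List A → ℕ} (h : Ind X L) {D : ℕ} (hD : 2 ≤ D) :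
    Wd L D = {w | D + 1 ≤ L w} ∩ ((cat {w | w ≠ []} {w | D + 1 ≤ L w})ᶜ ∩
      (cat {w | D + 1 ≤ L w} {w | w ≠ []})ᶜ) := by
  ext w
  constructor
  · rintro ⟨a, v, b, rfl, h1, h2, h3, h4⟩
    refine ⟨h4.ge, ?_, ?_⟩
    · rintro ⟨s, hs, t, ht, he⟩
      have ht' : D + 1 ≤ L t := ht
      rcases s with _ | ⟨c, s⟩
      · exact hs rfl
      have := (List.cons.inj he).2
      have h5 := h.le_append_left s t
      change _ = s ++ t at this
      rw [← this] at h5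
      omega
    · rintro ⟨s, hs, t, ht, he⟩
      have hs' : D + 1 ≤ L s := hs
      rcases List.eq_nil_or_concat t with rfl | ⟨t, c, rfl⟩
      · exact ht rfl
      have := congrArg List.dropLast he
      rw [List.concat_eq_append, ← List.append_assoc, ← List.cons_append, List.dropLast_concat,
        List.dropLast_concat] at this
      have h5 := h.le_append_right s t
      rw [← this] at h5
      omega
  · rintro ⟨h1, h2, h3⟩
    have h1' : D + 1 ≤ L w := h1
    rcases w with _ | ⟨a, w⟩
    · have := h.nil
      omega
    have h4 : L (a :: w) ≤ L w + 1 := by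
      by_cases hs : Starts X (a :: w)
      · rw [h.cons_in _ _ hs]; omega
      · rw [h.cons_out _ _ hs]
    rcases List.eq_nil_or_concat w with rfl | ⟨v, b, rfl⟩
    · have := h.nil
      omega
    rw [List.concat_eq_append] at *
    have h5 : L (v ++ [b]) ≤ D := by
      by_contra hc
      exact h2 ⟨[a], by simp, v ++ [b], by show D + 1 ≤ L _; omega, by simp⟩
    have h6 : L (a :: v) ≤ D := by
      by_contra hc
      exact h3 ⟨a :: v, by show D + 1 ≤ L _; omega, [b], by simp, by simp⟩
    have h7 : ¬ Ends X ((a :: v) ++ [b]) := by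
      intro hc
      have := h.snoc_in _ _ hc
      rw [List.cons_append] at this
      omega
    have h8 := h.snoc_out _ _ h7
    rw [List.cons_append] at h7 h8
    rw [ends_cons] at h7
    push Not at h7
    have h9 := h.snoc_out _ _ h7.2
    exact ⟨a, v, b, rfl, by omega, by omega, by omega, by omega⟩

theorem reg_Wd {X : Set (List A)} {L : List A → ℕ} (h : Ind X L) (hr : Reg X) {D : ℕ}
    (hD : 2 ≤ D) : Reg (Wd L D) := by
  rw [Wd_eq h hD]
  have := reg_Im h hr D
  exact this.inter ((reg_ne.cat this).compl.inter (this.cat reg_ne).compl)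

theorem reg_Zd {X : Set (List A)} {L : List A → ℕ} (h : Ind X L) (hr : Reg X) {D : ℕ}
    (hD : 2 ≤ D) : Reg (Zd X L D) := by
  have : {x | x ∈ X ∧ L x ≤ D} = X ∩ {w | D + 1 ≤ L w}ᶜ := by
    ext w; simp
  unfold Zd
  rw [this]
  exact (hr.inter (reg_Im h hr D).compl).union (reg_Wd h hr hD)

open Classical in
/-- number of nonempty suffixes `l'` of `l` with `l' ++ u ∈ Q` -/
noncomputable def cnt (Q : Set (List A)) : List A → List A → ℕ
  | [], _ => 0
  | a :: l, u => cnt Q l u + if (a :: l) ++ u ∈ Q then 1 else 0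

theorem cnt_append (Q : Set (List A)) (l m u : List A) :
    cnt Q (l ++ m) u = cnt Q l (m ++ u) + cnt Q m u := by
  induction l with
  | nil => simp [cnt]
  | cons a l ih =>
    have e : (a :: (l ++ m)) ++ u = (a :: l) ++ (m ++ u) := by simp
    simp only [List.cons_append, cnt, ih]
    simp only [List.cons_append] at e
    have e2 : a :: (l ++ m ++ u) ∈ Q ↔ a :: (l ++ (m ++ u)) ∈ Q := by rw [e]
    by_cases hq : a :: (l ++ m ++ u) ∈ Q
    · rw [if_pos hq, if_pos (e2.1 hq)]
      omega
    · rw [if_neg hq, if_neg (fun h => hq (e2.2 h))]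
      omega

theorem cnt_mono (Q Q' : Set (List A)) (l u u' : List A)
    (h : ∀ s, s ++ u ∈ Q → s ++ u' ∈ Q') : cnt Q l u ≤ cnt Q' l u' := by
  induction l with
  | nil => simp [cnt]
  | cons a l ih =>
    simp only [cnt]
    have := h (a :: l)
    split_ifs with h1 h2
    · omega
    · exact absurd (this h1) h2
    · omega
    · omega

theorem pref_left {X : Set (List A)} {u t : List A} (h : u ++ t ∈ Pref X) : u ∈ Pref X := by
  obtain ⟨s, hs⟩ := h
  exact ⟨t ++ s, by simpa using hs⟩

/-- depth hypothesis -/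
def Hyp (X : Set (List A)) (L : List A → ℕ) (k D : ℕ) : Prop :=
  ∀ l u r, D ≤ L u → cnt (Pref X) l u + cnt (Pref (rv X)) r u.reverse ≤ k

theorem Hyp.rv {X : Set (List A)} {L : List A → ℕ} {k D : ℕ} (h : Hyp X L k D) :
    Hyp (rv X) (fun w => L w.reverse) k D := by
  intro l u r hu
  have := h r u.reverse l hu
  rw [rv_rv]
  rw [List.reverse_reverse] at this
  omega

theorem key {X : Set (List A)} {L : List A → ℕ} {k D : ℕ} (h : Hyp X L k D)
    {z u : List A} (hz : z ∈ Wd L D) (hzP : z ∈ Pref X) (hzu : z <:+: u) (l r : List A) :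
    cnt (Pref X) l u + cnt (Pref (BifixCompl.rv X)) r u.reverse + 1 ≤ k := by
  obtain ⟨a, v, b, rfl, h1, h2, h3, h4⟩ := hz
  obtain ⟨s, t, rfl⟩ := hzu
  have H := h (l ++ (s ++ [a])) (v ++ [b]) (r ++ t.reverse) h3.ge
  rw [cnt_append, cnt_append, cnt_append] at H
  have e1 : cnt (Pref X) l (s ++ a :: (v ++ [b]) ++ t) ≤
      cnt (Pref X) l (s ++ [a] ++ (v ++ [b])) := by
    apply cnt_mono
    intro q hq
    apply pref_left (t := t)
    simpa using hq
  have e2 : 1 ≤ cnt (Pref X) [a] (v ++ [b]) := by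
    have : [a] ++ (v ++ [b]) ∈ Pref X := by simpa using hzP
    simp only [cnt, if_pos this]
    omega
  have e3 : cnt (Pref (BifixCompl.rv X)) r (s ++ a :: (v ++ [b]) ++ t).reverse ≤
      cnt (Pref (BifixCompl.rv X)) r (t.reverse ++ (v ++ [b]).reverse) := by
    apply cnt_mono
    intro q hq
    apply pref_left (t := a :: s.reverse)
    simpa using hq
  omega

theorem key' {X : Set (List A)} {L : List A → ℕ} {k D : ℕ} (h : Hyp X L k D)
    {z u : List A} (hz : z ∈ Wd L D) (hzP : z ∈ rv (Pref (rv X))) (hzu : z <:+: u)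
    (l r : List A) :
    cnt (Pref X) l u + cnt (Pref (rv X)) r u.reverse + 1 ≤ k := by
  have := key h.rv (z := z.reverse) (u := u.reverse) (by rw [Wd_rv]; simpa [mem_rv] using hz)
    hzP (List.reverse_infix.2 hzu) r l
  rw [rv_rv, List.reverse_reverse] at this
  omega

/-- the extension step -/
def Ext (X : Set (List A)) (L : List A → ℕ) (D : ℕ) : Set (List A) :=
  X ∪ (Wd L D ∩ ((Pref X)ᶜ ∩ (rv (Pref (rv X)))ᶜ))

theorem Ext_rv (X : Set (List A)) (L : List A → ℕ) (D : ℕ) :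
    Ext (rv X) (fun w => L w.reverse) D = rv (Ext X L D) := by
  have e : rv (Pref (rv (rv X))) = rv (Pref X) := by rw [rv_rv]
  unfold Ext
  rw [Wd_rv, e]
  ext w
  simp only [mem_rv, Set.mem_union, Set.mem_inter_iff, Set.mem_compl_iff, List.reverse_reverse]
  tauto

theorem Ext_prefix {X : Set (List A)} {L : List A → ℕ} (h : Ind X L) (hX : BifixCode X)
    {D : ℕ} (hD : 2 ≤ D) : ∀ x ∈ Ext X L D, ∀ y ∈ Ext X L D, x <+: y → x = y := by
  rintro x (hx | hx) y (hy | hy) hxy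
  · exact hX.1.2.2 x hx y hy hxy
  · exfalso
    obtain ⟨a, v, b, rfl, h1, h2, h3, h4⟩ := hy.1
    have := h.cons_in _ _ ⟨x, hx, hxy⟩
    omega
  · exfalso
    obtain ⟨t, rfl⟩ := hxy
    exact hx.2.1 ⟨t, hy⟩
  · exact Zd_prefix h hX hD x (Or.inr hx.1) y (Or.inr hy.1) hxy

theorem Ext_bifix {X : Set (List A)} {L : List A → ℕ} (h : Ind X L) (hX : BifixCode X)
    {D : ℕ} (hD : 2 ≤ D) : BifixCode (Ext X L D) := by
  have hne : (Ext X L D).Nonempty := hX.1.1.mono Set.subset_union_left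
  have hn : ∀ x ∈ Ext X L D, x ≠ [] := by
    rintro x (hx | hx)
    · exact hX.1.2.1 x hx
    · exact Zd_ne hX (L := L) (D := D) x (Or.inr hx.1)
  refine ⟨⟨hne, hn, Ext_prefix h hX hD⟩, hne, hn, ?_⟩
  intro x hx y hy hxy
  have := Ext_prefix h.rv (bifix_rv hX) hD
  rw [Ext_rv] at this
  exact List.reverse_injective (this x.reverse (by simpa [mem_rv] using hx) y.reverse
    (by simpa [mem_rv] using hy) (List.reverse_prefix.2 hxy))

theorem reg_Ext {X : Set (List A)} {L : List A → ℕ} (h : Ind X L) (hr : Reg X) {D : ℕ}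
    (hD : 2 ≤ D) : Reg (Ext X L D) :=
  hr.union ((reg_Wd h hr hD).inter (hr.pref.compl.inter hr.rv.pref.rv.compl))

/-- comparison of indicators -/
theorem ind_le {X Y : Set (List A)} {L L' : List A → ℕ} (h : Ind X L) (h' : Ind Y L')
    (u : List A) (hu : ∀ z, z <:+: u → z ∈ X → z ∈ Y) : L' u ≤ L u := by
  induction u using List.reverseRecOn with
  | nil => rw [h.nil, h'.nil]
  | append_singleton u a ih =>
    have ih' := ih (fun z hz => hu z (hz.trans ⟨[], [a], by simp⟩))
    by_cases h1 : Ends X (u ++ [a])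
    · have h2 : Ends Y (u ++ [a]) := by
        obtain ⟨x, hx, hs⟩ := h1
        exact ⟨x, hu x hs.isInfix hx, hs⟩
      rw [h.snoc_in _ _ h1, h'.snoc_in _ _ h2]
      exact ih'
    · have := h.snoc_out _ _ h1
      by_cases h2 : Ends Y (u ++ [a])
      · have := h'.snoc_in _ _ h2
        omega
      · have := h'.snoc_out _ _ h2
        omega

theorem pref_Ext {X : Set (List A)} {L : List A → ℕ} (h : Ind X L) {D : ℕ} {s u : List A}
    (hu : D + 2 ≤ L u) (hs : s ++ u ∈ Pref (Ext X L D)) : s ++ u ∈ Pref X := by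
  obtain ⟨t, ht | ht⟩ := hs
  · exact ⟨t, ht⟩
  · exfalso
    obtain ⟨a, v, b, he, h1, h2, h3, h4⟩ := ht.1
    have := h.le_infix (u := u) (w := s ++ u ++ t) ⟨s, t, rfl⟩
    rw [he] at this
    omega

theorem step {X : Set (List A)} {L L' : List A → ℕ} (h : Ind X L) {k D : ℕ}
    (hD : 2 ≤ D) (hH : Hyp X L (k + 1) D) (h' : Ind (Ext X L D) L') :
    Hyp (Ext X L D) L' k (D + 2) := by
  intro l u r hu
  have hle : L' u ≤ L u := ind_le h h' u (fun z _ hz => Or.inl hz)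
  have c1 : cnt (Pref (Ext X L D)) l u ≤ cnt (Pref X) l u :=
    cnt_mono _ _ _ _ _ (fun s hs => pref_Ext h (by omega) hs)
  have c2 : cnt (Pref (rv (Ext X L D))) r u.reverse ≤ cnt (Pref (rv X)) r u.reverse := by
    apply cnt_mono
    intro s hs
    rw [← Ext_rv] at hs
    exact pref_Ext h.rv (by rw [List.reverse_reverse]; omega) hs
  suffices cnt (Pref X) l u + cnt (Pref (rv X)) r u.reverse + 1 ≤ k + 1 by omega
  by_contra hcon
  have hz : ∀ z, z <:+: u → z ∈ Zd X L D → z ∈ Ext X L D := by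
    rintro z hzu (hz | hz)
    · exact Or.inl hz.1
    · refine Or.inr ⟨hz, ?_, ?_⟩
      · intro hp
        exact hcon (key hH hz hp hzu l r)
      · intro hp
        exact hcon (key' hH hz hp hzu l r)
  have := ind_le (ind_Zd h hD) h' u hz
  omega

theorem main_ind (k : ℕ) : ∀ (X : Set (List A)) (L : List A → ℕ) (D : ℕ), Ind X L →
    BifixCode X → Reg X → 2 ≤ D → Hyp X L k D →
    ∃ Z : Set (List A), Reg Z ∧ BifixCode Z ∧ FComplete Z Set.univ ∧ X ⊆ Z := by
  induction k with
  | zero =>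
    intro X L D h hX hr hD hH
    have hsub : X ⊆ Zd X L D := by
      intro x hx
      left
      refine ⟨hx, ?_⟩
      rcases x with _ | ⟨a, u⟩
      · rw [h.nil]; omega
      rw [h.cons_in _ _ ⟨_, hx, List.prefix_rfl⟩]
      by_contra hc
      have := hH [a] u [] (by omega)
      have hm : [a] ++ u ∈ Pref X := ⟨[], by simpa using hx⟩
      simp only [cnt, if_pos hm] at this
      omega
    have hb := Zd_bifix h hX hD (hX.1.1.mono hsub)
    exact ⟨Zd X L D, reg_Zd h hr hD, hb,
      complete (ind_Zd h hD) hb D (fun w => min_le_left _ _), hsub⟩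
  | succ k ih =>
    intro X L D h hX hr hD hH
    have hb := Ext_bifix h hX hD
    obtain ⟨L', h'⟩ := exists_ind hb
    obtain ⟨Z, h1, h2, h3, h4⟩ := ih (Ext X L D) L' (D + 2) h' hb (reg_Ext h hr hD) (by omega)
      (step h hD hH h')
    exact ⟨Z, h1, h2, h3, Set.subset_union_left.trans h4⟩

/-- the finite depth bound -/
theorem cnt_bound {X : Set (List A)} (hX : BifixCode X) (hr : Reg X) (l u : List A) :
    cnt (Pref X) l u ≤ (Set.range (quo X)).ncard := by
  let T : List A → Set (Set (List A)) := fun l =>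
    {q | ∃ s, s <:+ l ∧ s ++ u ∈ Pref X ∧ q = quo X (s ++ u)}
  have hT : ∀ l, T l ⊆ Set.range (quo X) := by
    rintro l _ ⟨s, -, -, rfl⟩
    exact ⟨_, rfl⟩
  have hTf : ∀ l, (T l).Finite := fun l => hr.subset (hT l)
  suffices cnt (Pref X) l u ≤ (T l).ncard from this.trans (Set.ncard_le_ncard (hT l) hr)
  induction l with
  | nil => simp [cnt]
  | cons a l ih =>
    have hsub : T l ⊆ T (a :: l) := by
      rintro _ ⟨s, hs, hs', rfl⟩
      exact ⟨s, hs.trans (List.suffix_cons _ _), hs', rfl⟩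
    simp only [cnt]
    split_ifs with hc
    · have hnot : quo X ((a :: l) ++ u) ∉ T l := by
        rintro ⟨s, hs, hs', he⟩
        obtain ⟨t, ht⟩ := hs'
        have h1 : t ∈ quo X (s ++ u) := ht
        rw [← he] at h1
        have h2 : (a :: l) ++ u ++ t ∈ X := h1
        obtain ⟨p, rfl⟩ := hs
        have := hX.2.2.2 _ ht _ h2 ⟨a :: p, by simp⟩
        have := congrArg List.length this
        simp at this
        omega
      have h3 : insert (quo X ((a :: l) ++ u)) (T l) ⊆ T (a :: l) :=
        Set.insert_subset ⟨a :: l, List.suffix_rfl, hc, rfl⟩ hsub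
      have h4 := Set.ncard_le_ncard h3 (hTf _)
      rw [Set.ncard_insert_of_notMem hnot (hTf _)] at h4
      omega
    · have := Set.ncard_le_ncard hsub (hTf _)
      omega

end

end BifixCompl

/-- Every rational bifix code is contained in a rational complete
bifix code. -/
theorem rational_bifix_contained_in_rational_complete_bifix
    {A : Type*} [Fintype A] [Nonempty A] (X : Set (List A))
    (hXrat : IsRational X) (hXbifix : BifixCode X) :
    ∃ Z : Set (List A), IsRational Z ∧ BifixCode Z ∧ FComplete Z Set.univ ∧
      X ⊆ Z := by
  rw [← BifixCompl.reg_iff_rational] at hXrat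
  obtain ⟨L, hL⟩ := BifixCompl.exists_ind hXbifix
  obtain ⟨Z, h1, h2, h3, h4⟩ := BifixCompl.main_ind _ X L 2 hL hXbifix hXrat le_rfl
    (fun l u r _ => Nat.add_le_add (BifixCompl.cnt_bound hXbifix hXrat l u)
      (BifixCompl.cnt_bound (BifixCompl.bifix_rv hXbifix) hXrat.rv r u.reverse))
  exact ⟨Z, BifixCompl.reg_iff_rational.1 h1, h2, h3, h4⟩
end
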